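/- arXiv:2407.15637 — 13 statements merged into one kernel-verified Lean document; each statement's English description precedes it below -/
import Mathlib

section
/- Let T be an integral domain with fraction field F, let E ⊆ T be the set of Egyptian elements of T (a multiplicatively closed set), and let E⁻¹T denote the localization of T at E, viewed as the subring of F consisting of fractions t/e with t ∈ T and e ∈ E. Then the reciprocal complement of E⁻¹T equals the reciprocal complement of T, i.e., R(E⁻¹T) = R(T) as subrings of F. -/
/-- The reciprocal complement of a subset `A` of a field `F`: the subring of `F`
generated by the reciprocals of the nonzero elements of `A`. -/
def ReciprocalComplementSet {F : Type*} [Field F] (A : Set F) : Subring F :=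
  Subring.closure {x : F | ∃ f ∈ A, f ≠ 0 ∧ x = f⁻¹}

/-- The reciprocal complement `R(T)` of an integral domain `T` with fraction field `F`:
the subring of `F` generated by the reciprocals of the nonzero elements of `T`. -/
def ReciprocalComplement (T F : Type*) [CommRing T] [Field F] [Algebra T F] : Subring F :=
  Subring.closure {x : F | ∃ f : T, f ≠ 0 ∧ x = (algebraMap T F f)⁻¹}

/-- A nonzero element `x` of a domain `T` is Egyptian if, in the fraction field `F`,
it is a finite sum of reciprocals of nonzero elements of `T`. -/
def IsEgyptian (T F : Type*) [CommRing T] [Field F] [Algebra T F] (x : T) : Prop :=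
  x ≠ 0 ∧ ∃ s : Multiset T, (∀ d ∈ s, d ≠ 0) ∧
    algebraMap T F x = (s.map fun d => (algebraMap T F d)⁻¹).sum

/-- The reciprocal complement of the localization `E⁻¹T` of `T` at the set `E` of Egyptian
elements (viewed inside the fraction field `F` as the set of fractions `t/e` with `t ∈ T`,
`e ∈ E`) coincides with the reciprocal complement of `T`. -/
theorem recip_of_egyptian_localization_eq (T F : Type*) [CommRing T] [IsDomain T] [Field F]
    [Algebra T F] [IsFractionRing T F] :
    ReciprocalComplementSet
      {x : F | ∃ t e : T, IsEgyptian T F e ∧ x = algebraMap T F t / algebraMap T F e}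
      = ReciprocalComplement T F := by
  apply le_antisymm
  -- If `e = ∑ 1/dᵢ`, then the reciprocal of `t/e` is `∑ 1/dᵢ * 1/t`, which lies in `R(T)`.
  · refine Subring.closure_le.mpr ?_
    rintro _ ⟨_, ⟨t, e, ⟨-, s, hs, he⟩, rfl⟩, hf, rfl⟩
    have ht : t ≠ 0 := by
      rintro rfl
      simp at hf
    rw [inv_div, div_eq_mul_inv, he]
    refine mul_mem (multiset_sum_mem _ fun x hx => ?_) (Subring.subset_closure ⟨t, ht, rfl⟩)
    obtain ⟨d, hd, rfl⟩ := Multiset.mem_map.mp hx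
    exact Subring.subset_closure ⟨d, hs d hd, rfl⟩
  -- `T ⊆ E⁻¹T`, since `1` is Egyptian.
  · refine Subring.closure_mono ?_
    rintro _ ⟨f, hf, rfl⟩
    refine ⟨algebraMap T F f, ⟨f, 1, ⟨one_ne_zero, {1}, by simp, by simp⟩, by simp⟩, ?_, rfl⟩
    exact (map_ne_zero_iff _ (IsFractionRing.injective T F)).mpr hf
end

section
/- Let K be a field and let T be an integral domain that is a K-algebra (with K a subring of T) all of whose Egyptian elements lie in K. Let x_1, ..., x_n ∈ T \ K and let u ∈ K be nonzero. Then the element y = u + 1/x_1 + ... + 1/x_n of the fraction field of T is a unit of the reciprocal complement R(T). -/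
section

variable {T F : Type*} [CommRing T] [Field F] [Algebra T F]

theorem inv_mem_reciprocalComplement {f : T} (hf : f ≠ 0) :
    (algebraMap T F f)⁻¹ ∈ ReciprocalComplement T F :=
  Subring.subset_closure ⟨f, hf, rfl⟩

/-- Every element of the reciprocal complement is a finite sum of reciprocals: products and
negatives of reciprocals are again reciprocals, so no other ring operations are needed. -/
theorem mem_reciprocalComplement_iff [IsDomain T] {z : F} :
    z ∈ ReciprocalComplement T F ↔ ∃ s : Multiset T, (∀ d ∈ s, d ≠ 0) ∧
      z = (s.map fun d => (algebraMap T F d)⁻¹).sum := by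
  constructor
  · intro hz
    induction hz using Subring.closure_induction with
    | mem z hz =>
      obtain ⟨f, hf, rfl⟩ := hz
      exact ⟨{f}, by simpa using hf, by simp⟩
    | zero => exact ⟨0, by simp, by simp⟩
    | one => exact ⟨{1}, by simp, by simp⟩
    | add a b _ _ ha hb =>
      obtain ⟨s, hs, rfl⟩ := ha
      obtain ⟨t, ht, rfl⟩ := hb
      refine ⟨s + t, fun d hd => ?_, by simp⟩
      rcases Multiset.mem_add.1 hd with h | h
      exacts [hs d h, ht d h]
    | neg a _ ha =>
      obtain ⟨s, hs, rfl⟩ := ha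
      refine ⟨s.map Neg.neg, fun d hd => ?_, ?_⟩
      · obtain ⟨e, he, rfl⟩ := Multiset.mem_map.1 hd
        exact neg_ne_zero.2 (hs e he)
      · simp [Multiset.map_map, inv_neg]
    | mul a b _ _ ha hb =>
      obtain ⟨s, hs, rfl⟩ := ha
      obtain ⟨t, ht, rfl⟩ := hb
      refine ⟨s.bind fun a => t.map fun b => a * b, fun d hd => ?_, ?_⟩
      · obtain ⟨a, ha, hd⟩ := Multiset.mem_bind.1 hd
        obtain ⟨b, hb, rfl⟩ := Multiset.mem_map.1 hd
        exact mul_ne_zero (hs a ha) (ht b hb)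
      · simp [Multiset.map_bind, Multiset.sum_bind, Multiset.map_map,
          mul_inv, Multiset.sum_map_mul_left, Multiset.sum_map_mul_right, -mul_inv_rev]
  · rintro ⟨s, hs, rfl⟩
    refine Subring.multiset_sum_mem _ _ fun a ha => ?_
    obtain ⟨d, hd, rfl⟩ := Multiset.mem_map.1 ha
    exact inv_mem_reciprocalComplement (hs d hd)

theorem exists_algebraMap_eq_mul_prod {ι : Type*} (c : T) (x : ι → T)
    (hx : ∀ i, algebraMap T F (x i) ≠ 0) (S : Finset ι) :
    ∃ f : T, algebraMap T F f =
      (algebraMap T F c + ∑ i ∈ S, (algebraMap T F (x i))⁻¹) *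
        ∏ i ∈ S, algebraMap T F (x i) := by
  classical
  induction S using Finset.induction_on with
  | empty => exact ⟨c, by simp⟩
  | insert i S hi ih =>
    obtain ⟨f, hf⟩ := ih
    refine ⟨f * x i + ∏ j ∈ S, x j, ?_⟩
    rw [Finset.sum_insert hi, Finset.prod_insert hi, map_add, map_mul, hf, map_prod]
    field_simp [hx i]
    ring

/-- If no partial sum `c + ∑_{i ∈ A} 1/x_i` vanishes, then no maximal ideal of the reciprocal
complement contains the full sum. -/
theorem isUnit_of_partial_sums_ne_zero [IsDomain T] [FaithfulSMul T F] {ι : Type*} (c : T)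
    (hc : algebraMap T F c ∈ ReciprocalComplement T F) (x : ι → T) (hx : ∀ i, x i ≠ 0)
    (S : Finset ι)
    (hne : ∀ A ⊆ S, algebraMap T F c + ∑ i ∈ A, (algebraMap T F (x i))⁻¹ ≠ 0)
    (y : ReciprocalComplement T F)
    (hy : (y : F) = algebraMap T F c + ∑ i ∈ S, (algebraMap T F (x i))⁻¹) :
    IsUnit y := by
  classical
  by_contra hnu
  obtain ⟨m, hm, hym⟩ := exists_max_ideal_of_mem_nonunits hnu
  have hx' : ∀ i, algebraMap T F (x i) ≠ 0 := fun i => by simpa using hx i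
  let r : ι → ReciprocalComplement T F :=
    fun i => ⟨(algebraMap T F (x i))⁻¹, inv_mem_reciprocalComplement (hx i)⟩
  let A := S.filter fun i => r i ∉ m
  let z : ReciprocalComplement T F := ⟨algebraMap T F c, hc⟩ + ∑ i ∈ A, r i
  have hz : (z : F) = algebraMap T F c + ∑ i ∈ A, (algebraMap T F (x i))⁻¹ := by
    simp [z, r]
  have hyz : y = z + ∑ i ∈ S.filter (fun i => r i ∈ m), r i := by
    apply Subtype.ext
    rw [hy, Subring.coe_add, hz, add_assoc, ← Finset.sum_filter_add_sum_filter_not S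
      (fun i => r i ∈ m)]
    simp [A, r, add_comm]
  have hzm : z ∈ m := by
    have hsum : ∑ i ∈ S.filter (fun i => r i ∈ m), r i ∈ m :=
      m.sum_mem fun i hi => (Finset.mem_filter.1 hi).2
    rw [hyz] at hym
    exact (m.add_mem_iff_left hsum).1 hym
  obtain ⟨f, hf⟩ := exists_algebraMap_eq_mul_prod (F := F) c x hx' A
  have hP : ∏ i ∈ A, algebraMap T F (x i) ≠ 0 := Finset.prod_ne_zero_iff.2 fun i _ => hx' i
  have hzA := hne A (Finset.filter_subset _ _)
  have hf0 : f ≠ 0 := by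
    rintro rfl
    rw [map_zero] at hf
    exact mul_ne_zero hzA hP hf.symm
  have hprod : ∏ i ∈ A, r i =
      z * ⟨(algebraMap T F f)⁻¹, inv_mem_reciprocalComplement hf0⟩ := by
    apply Subtype.ext
    rw [Subring.coe_mul, hz]
    change _ = _ * (algebraMap T F f)⁻¹
    rw [hf]
    simp only [r, SubmonoidClass.coe_finsetProd, Finset.prod_inv_distrib]
    rw [mul_inv, ← mul_assoc, mul_inv_cancel₀ hzA, one_mul]
  have hmem : ∏ i ∈ A, r i ∈ m := hprod ▸ m.mul_mem_right _ hzm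
  obtain ⟨i, hi, him⟩ := (hm.isPrime.prod_mem_iff).1 hmem
  exact (Finset.mem_filter.1 hi).2 him

end

/-- Let `T` be an integral domain that is an algebra over a field `K` (with `K` a subring
of `T`), all of whose Egyptian elements lie in `K`.  For `x₁, …, xₙ ∈ T \ K` and
`0 ≠ u ∈ K`, the element `y = u + 1/x₁ + ⋯ + 1/xₙ` is a unit of `R(T)`. -/
theorem unit_of_constant_plus_reciprocals (K T F : Type*) [Field K] [CommRing T] [IsDomain T]
    [Algebra K T] [Field F] [Algebra T F] [IsFractionRing T F]
    (hEgypt : ∀ x : T, IsEgyptian T F x → x ∈ Set.range (algebraMap K T))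
    (n : ℕ) (x : Fin n → T) (hx : ∀ i, x i ∉ Set.range (algebraMap K T))
    (u : K) (hu : u ≠ 0) :
    ∃ hy : algebraMap T F (algebraMap K T u) + ∑ i, (algebraMap T F (x i))⁻¹
        ∈ ReciprocalComplement T F,
      IsUnit (⟨algebraMap T F (algebraMap K T u) + ∑ i, (algebraMap T F (x i))⁻¹, hy⟩ :
        ReciprocalComplement T F) := by
  classical
  have : FaithfulSMul T F := (faithfulSMul_iff_algebraMap_injective T F).2
    (IsFractionRing.injective T F)
  have hx0 : ∀ i, x i ≠ 0 := fun i h => hx i ⟨0, by rw [h, map_zero]⟩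
  have huR : algebraMap T F (algebraMap K T u) ∈ ReciprocalComplement T F := by
    -- `u` is itself the reciprocal of `u⁻¹ ∈ K`.
    have h0 : algebraMap K T u⁻¹ ≠ 0 := by simpa using hu
    convert inv_mem_reciprocalComplement (F := F) h0 using 1
    refine eq_inv_of_mul_eq_one_left ?_
    rw [← map_mul, ← map_mul, mul_inv_cancel₀ hu, map_one, map_one]
  have hmem : ∀ S : Finset (Fin n), algebraMap T F (algebraMap K T u) +
      ∑ i ∈ S, (algebraMap T F (x i))⁻¹ ∈ ReciprocalComplement T F := fun S =>
    add_mem huR (sum_mem fun i _ => inv_mem_reciprocalComplement (hx0 i))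
  have key : ∀ S : Finset (Fin n),
      algebraMap T F (algebraMap K T u) + ∑ i ∈ S, (algebraMap T F (x i))⁻¹ ≠ 0 := by
    intro S
    induction S using Finset.strongInduction with
    | H S ih =>
      rcases S.eq_empty_or_nonempty with rfl | ⟨i, hi⟩
      · simpa using hu
      intro h0
      have hss := Finset.erase_ssubset hi
      have hunit := isUnit_of_partial_sums_ne_zero _ huR x hx0 (S.erase i)
        (fun A hA => ih A (hA.trans_ssubset hss)) ⟨_, hmem _⟩ rfl
      obtain ⟨w, hw⟩ := hunit.exists_right_inv
      have hw' := congrArg Subtype.val hw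
      change (algebraMap T F (algebraMap K T u) +
        ∑ j ∈ S.erase i, (algebraMap T F (x j))⁻¹) * (w : F) = 1 at hw'
      rw [← Finset.add_sum_erase S _ hi] at h0
      have hxi : algebraMap T F (x i) ≠ 0 := by simpa using hx0 i
      have hxw : algebraMap T F (x i) = ((-w : ReciprocalComplement T F) : F) := by
        rw [show algebraMap T F (algebraMap K T u) +
          ∑ j ∈ S.erase i, (algebraMap T F (x j))⁻¹ = -(algebraMap T F (x i))⁻¹ by
            linear_combination h0] at hw'
        field_simp at hw'
        rw [Subring.coe_neg, hw']
      refine hx i (hEgypt _ ⟨hx0 i, mem_reciprocalComplement_iff.1 ?_⟩)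
      rw [hxw]
      exact (-w).2
  exact ⟨hmem _, isUnit_of_partial_sums_ne_zero _ huR x hx0 Finset.univ (fun A _ => key A)
    _ rfl⟩
end

section
/- Let T be an integral domain. Then the reciprocal complement R(T) is a local ring, and its unique maximal ideal is generated (as an ideal of R(T)) by the set of all elements of the form 1/x, where x is a nonzero element of T that is not Egyptian. -/
section

variable {T F : Type*} [CommRing T] [Field F] [Algebra T F]

local notation "ι" => algebraMap T F
local notation "R" => ReciprocalComplement T F

theorem inv_mem_recip {d : T} (hd : d ≠ 0) : (ι d)⁻¹ ∈ R :=
  Subring.subset_closure ⟨d, hd, rfl⟩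

theorem sum_inv_mem_recip (s : Multiset T) (hs : ∀ d ∈ s, d ≠ 0) :
    (s.map fun d => (ι d)⁻¹).sum ∈ R := by
  refine multiset_sum_mem _ fun y hy => ?_
  obtain ⟨d, hd, rfl⟩ := Multiset.mem_map.1 hy
  exact inv_mem_recip (hs d hd)

/-- Every element of the reciprocal complement is a finite sum of reciprocals: such sums are closed
under products and, because `-(1/d) = 1/(-d)`, under negation. -/
theorem exists_sum_inv [IsDomain T] {y : F} (hy : y ∈ R) :
    ∃ s : Multiset T, (∀ d ∈ s, d ≠ 0) ∧ y = (s.map fun d => (ι d)⁻¹).sum := by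
  induction hy using Subring.closure_induction with
  | mem x hx =>
    obtain ⟨f, hf, rfl⟩ := hx
    exact ⟨{f}, by simpa using hf, by simp⟩
  | zero => exact ⟨0, by simp, by simp⟩
  | one => exact ⟨{1}, by simp, by simp⟩
  | add x y _ _ hx hy =>
    obtain ⟨s, hs, rfl⟩ := hx
    obtain ⟨t, ht, rfl⟩ := hy
    refine ⟨s + t, fun d hd => ?_, by simp⟩
    rcases Multiset.mem_add.1 hd with h | h
    exacts [hs d h, ht d h]
  | neg x _ hx =>
    obtain ⟨s, hs, rfl⟩ := hx
    refine ⟨s.map Neg.neg, fun d hd => ?_, ?_⟩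
    · obtain ⟨e, he, rfl⟩ := Multiset.mem_map.1 hd
      exact neg_ne_zero.2 (hs e he)
    · simp [Multiset.map_map, inv_neg]
  | mul x y hxm _ hx hy =>
    clear hxm
    obtain ⟨s, hs, rfl⟩ := hx
    obtain ⟨t, ht, rfl⟩ := hy
    induction s using Multiset.induction_on with
    | empty => exact ⟨0, by simp, by simp⟩
    | cons a s ih =>
      obtain ⟨u, hu, hu'⟩ := ih fun d hd => hs d (Multiset.mem_cons_of_mem hd)
      refine ⟨t.map (a * ·) + u, fun d hd => ?_, ?_⟩
      · rcases Multiset.mem_add.1 hd with h | h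
        · obtain ⟨e, he, rfl⟩ := Multiset.mem_map.1 h
          exact mul_ne_zero (hs a (Multiset.mem_cons_self a s)) (ht e he)
        · exact hu d h
      · simp [← hu', Multiset.map_map, Multiset.sum_map_mul_left, mul_comm]
        ring

theorem isEgyptian_iff [IsDomain T] (x : T) : IsEgyptian T F x ↔ x ≠ 0 ∧ ι x ∈ R := by
  refine and_congr_right fun _ => ⟨?_, exists_sum_inv⟩
  rintro ⟨s, hs, h⟩
  exact h ▸ sum_inv_mem_recip s hs

variable [IsFractionRing T F]

theorem algebraMap_ne_zero_of_ne_zero {x : T} (hx : x ≠ 0) : ι x ≠ 0 :=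
  fun h => hx ((IsFractionRing.injective T F) (by simpa using h))

/-- A reciprocal `1/x` has `1/(1 + 1/x) = 1 - 1/(x + 1)`. -/
theorem inv_one_add_inv_mem {x : T} (hx : x ≠ 0) (hx1 : x + 1 ≠ 0) :
    1 + (ι x)⁻¹ ≠ 0 ∧ (1 + (ι x)⁻¹)⁻¹ ∈ R := by
  have h := algebraMap_ne_zero_of_ne_zero (F := F) hx
  have h1 := algebraMap_ne_zero_of_ne_zero (F := F) hx1
  have key : (1 + (ι x)⁻¹) * (1 - (ι (x + 1))⁻¹) = 1 := by
    rw [map_add, map_one] at h1 ⊢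
    field_simp
    ring
  refine ⟨left_ne_zero_of_mul_eq_one key, ?_⟩
  rw [inv_eq_of_mul_eq_one_right key]
  exact sub_mem (one_mem _) (inv_mem_recip hx1)

/-- Clearing denominators in `1 + ∑ 1/xᵢ`. -/
theorem exists_prod_mul (s : Multiset T) (hs : ∀ d ∈ s, d ≠ 0) :
    ∃ p : T, ((s.map fun d => (ι d)⁻¹).prod)⁻¹ * (1 + (s.map fun d => (ι d)⁻¹).sum) = ι p := by
  have hprod : ∀ s : Multiset T, ((s.map fun d => (ι d)⁻¹).prod)⁻¹ = ι s.prod := by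
    intro s
    simp [Multiset.prod_map_inv, map_multiset_prod]
  induction s using Multiset.induction_on with
  | empty => exact ⟨1, by simp⟩
  | cons a s ih =>
    obtain ⟨p, hp⟩ := ih fun d hd => hs d (Multiset.mem_cons_of_mem hd)
    have ha := algebraMap_ne_zero_of_ne_zero (F := F) (hs a (Multiset.mem_cons_self a s))
    refine ⟨a * p + s.prod, ?_⟩
    rw [map_add, map_mul, ← hp, ← hprod, Multiset.map_cons, Multiset.prod_cons,
      Multiset.sum_cons, mul_inv, inv_inv]
    field_simp
    ring

/-- The key step: a sum `1 + ∑ 1/xᵢ` with all `xᵢ` non-Egyptian is invertible in the reciprocal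
complement. -/
theorem one_add_sum_inv (s : Multiset T) (hs : ∀ d ∈ s, d ≠ 0 ∧ ι d ∉ R) :
    1 + (s.map fun d => (ι d)⁻¹).sum ≠ 0 ∧ (1 + (s.map fun d => (ι d)⁻¹).sum)⁻¹ ∈ R := by
  induction s using Multiset.strongInductionOn with
  | ih s IH =>
  have hU : 1 + (s.map fun d => (ι d)⁻¹).sum ≠ 0 := by
    rcases s.empty_or_exists_mem with rfl | ⟨a, ha⟩
    · simp
    obtain ⟨t, rfl⟩ := Multiset.exists_cons_of_mem ha
    obtain ⟨-, h2⟩ := IH t (Multiset.lt_cons_self t a)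
      fun d hd => hs d (Multiset.mem_cons_of_mem hd)
    intro h0
    -- Otherwise `1/a` is minus the shorter sum, whose inverse is in `R`, so that `a ∈ R`.
    apply (hs a ha).2
    have : ι a = -(1 + (t.map fun d => (ι d)⁻¹).sum)⁻¹ := by
      rw [← inv_neg, eq_comm, inv_eq_iff_eq_inv, eq_comm, eq_neg_iff_add_eq_zero]
      rw [Multiset.map_cons, Multiset.sum_cons] at h0
      linear_combination h0
    rw [this]
    exact neg_mem h2
  refine ⟨hU, ?_⟩
  -- Factors are removed one at a time from the numerator of `∏ aᵢ / U`; `J` indexes the factors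
  -- still present and `K` those already removed.
  have step : ∀ K J : Multiset T, J + K = s →
      (J.map fun d => (ι d)⁻¹).prod * (1 + (s.map fun d => (ι d)⁻¹).sum)⁻¹ ∈ R := by
    intro K
    induction K using Multiset.induction_on with
    | empty =>
      intro J hJ
      rw [add_zero] at hJ
      subst hJ
      obtain ⟨p, hp⟩ := exists_prod_mul (F := F) J fun d hd => (hs d hd).1
      have hP : (J.map fun d => (ι d)⁻¹).prod ≠ 0 := by
        refine Multiset.prod_ne_zero fun h => ?_
        obtain ⟨d, hd, hd0⟩ := Multiset.mem_map.1 h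
        exact inv_ne_zero (algebraMap_ne_zero_of_ne_zero (hs d hd).1) hd0
      have hp0 : p ≠ 0 := by
        rintro rfl
        rw [map_zero] at hp
        exact mul_ne_zero (inv_ne_zero hP) hU hp
      have := inv_mem_recip (F := F) hp0
      rwa [← hp, mul_inv, inv_inv] at this
    | cons b K ihK =>
      intro J hJ
      have h1 := ihK (b ::ₘ J) (by rw [← hJ, Multiset.cons_add, Multiset.add_cons])
      have hs' : s = b ::ₘ (J + K) := by rw [← hJ, Multiset.add_cons]
      have hb := hs b (by simp [hs'])
      obtain ⟨hV, hVm⟩ := IH (J + K) (hs' ▸ Multiset.lt_cons_self _ _)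
        fun d hd => hs d (hs' ▸ Multiset.mem_cons_of_mem hd)
      have hb1 : b + 1 ≠ 0 := by
        intro h
        apply hb.2
        rw [eq_neg_of_add_eq_zero_left h, map_neg, map_one]
        exact neg_mem (one_mem _)
      obtain ⟨hW, hWm⟩ := inv_one_add_inv_mem (F := F) hb.1 hb1
      have hJm : (J.map fun d => (ι d)⁻¹).prod ∈ R := by
        refine multiset_prod_mem _ fun y hy => ?_
        obtain ⟨d, hd, rfl⟩ := Multiset.mem_map.1 hy
        exact inv_mem_recip (hs d (by simp [← hJ, hd])).1
      have hSm : ((J + K).map fun d => (ι d)⁻¹).sum ∈ R :=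
        sum_inv_mem_recip _ fun d hd => (hs d (hs' ▸ Multiset.mem_cons_of_mem hd)).1
      have hsum : (s.map fun d => (ι d)⁻¹).sum
          = (ι b)⁻¹ + ((J + K).map fun d => (ι d)⁻¹).sum := by
        rw [hs', Multiset.map_cons, Multiset.sum_cons]
      rw [Multiset.map_cons, Multiset.prod_cons] at h1
      rw [hsum] at hU h1 ⊢
      generalize ((J + K).map fun d => (ι d)⁻¹).sum = S at *
      generalize (J.map fun d => (ι d)⁻¹).prod = m at *
      generalize (ι b)⁻¹ = β at *
      have key : m * (1 + (β + S))⁻¹ =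
          (1 + S)⁻¹ * (1 + β)⁻¹ * (m + (β * m * (1 + (β + S))⁻¹) * S) := by
        field_simp
        ring
      rw [key]
      exact mul_mem (mul_mem hVm hWm) (add_mem hJm (mul_mem h1 hSm))
  simpa using step s 0 (zero_add s)

theorem recip_jacobson [IsDomain T] (x : T) (hx : x ≠ 0) (hxR : ι x ∉ R) (y : R)
    (hy : (y : F) = (ι x)⁻¹) : y ∈ Ideal.jacobson (⊥ : Ideal R) := by
  rw [Ideal.mem_jacobson_bot]
  intro r
  obtain ⟨t, ht, hr⟩ := exists_sum_inv r.2
  have hx0 := algebraMap_ne_zero_of_ne_zero (F := F) hx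
  obtain ⟨h0, h1⟩ := one_add_sum_inv (F := F) (t.map (x * ·)) (by
    intro d hd
    obtain ⟨e, he, rfl⟩ := Multiset.mem_map.1 hd
    refine ⟨mul_ne_zero hx (ht e he), fun h => hxR ?_⟩
    have := mul_mem h (inv_mem_recip (F := F) (ht e he))
    rwa [map_mul, mul_inv_cancel_right₀ (algebraMap_ne_zero_of_ne_zero (ht e he))] at this)
  have heq : 1 + ((t.map (x * ·)).map fun d => (ι d)⁻¹).sum = ((y * r + 1 : R) : F) := by
    simp [Multiset.map_map, Multiset.sum_map_mul_left, hy, hr, add_comm, mul_comm]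
  rw [heq] at h0 h1
  exact IsUnit.of_mul_eq_one ⟨_, h1⟩ (Subtype.ext (mul_inv_cancel₀ h0))

/-- Every element of the reciprocal complement is, modulo any ideal containing the reciprocals
of the non-Egyptian elements, a quotient `a/b` of elements of `T` lying in `R`. -/
theorem exists_quotient_add [IsDomain T] (I : Ideal R)
    (hI : ∀ y : R, ∀ x : T, x ≠ 0 → ι x ∉ R → (y : F) = (ι x)⁻¹ → y ∈ I) (r : R) :
    ∃ a b : T, ι a ∈ R ∧ ι b ∈ R ∧ b ≠ 0 ∧ ∃ n ∈ I, (r : F) = ι a * (ι b)⁻¹ + (n : F) := by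
  obtain ⟨s, hs, hr⟩ := exists_sum_inv r.2
  rw [hr]
  clear hr
  induction s using Multiset.induction_on with
  | empty => exact ⟨0, 1, by simp, by simp, one_ne_zero, 0, I.zero_mem, by simp⟩
  | cons d s ih =>
    obtain ⟨a, b, ha, hb, hb0, n, hn, h⟩ := ih fun d hd => hs d (Multiset.mem_cons_of_mem hd)
    have hd := hs d (Multiset.mem_cons_self d s)
    rw [Multiset.map_cons, Multiset.sum_cons, h]
    by_cases hdR : ι d ∈ R
    · refine ⟨b + a * d, b * d, ?_, ?_, mul_ne_zero hb0 hd, n, hn, ?_⟩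
      · rw [map_add, map_mul]
        exact add_mem hb (mul_mem ha hdR)
      · rw [map_mul]
        exact mul_mem hb hdR
      · have h1 := algebraMap_ne_zero_of_ne_zero (F := F) hb0
        have h2 := algebraMap_ne_zero_of_ne_zero (F := F) hd
        rw [map_add, map_mul, map_mul]
        field_simp
        ring
    · refine ⟨a, b, ha, hb, hb0, ⟨_, inv_mem_recip hd⟩ + n,
        I.add_mem (hI _ d hd hdR rfl) hn, ?_⟩
      push_cast
      ring

end

/-- The reciprocal complement `R(T)` of an integral domain `T` is a local ring, whose
unique maximal ideal is generated by the elements `1/x` with `x` a nonzero non-Egyptian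
element of `T`. -/
theorem recip_isLocalRing_and_maximalIdeal_span (T F : Type*) [CommRing T] [IsDomain T]
    [Field F] [Algebra T F] [IsFractionRing T F] :
    IsLocalRing (ReciprocalComplement T F) ∧
      ∀ M : Ideal (ReciprocalComplement T F), M.IsMaximal →
        M = Ideal.span {y : ReciprocalComplement T F |
          ∃ x : T, x ≠ 0 ∧ ¬ IsEgyptian T F x ∧ (y : F) = (algebraMap T F x)⁻¹} := by
  set I := Ideal.span {y : ReciprocalComplement T F |
    ∃ x : T, x ≠ 0 ∧ ¬ IsEgyptian T F x ∧ (y : F) = (algebraMap T F x)⁻¹} with hIdef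
  have hgen : ∀ y : ReciprocalComplement T F, ∀ x : T, x ≠ 0 →
      algebraMap T F x ∉ ReciprocalComplement T F → (y : F) = (algebraMap T F x)⁻¹ → y ∈ I :=
    fun y x hx hxR hy =>
      Ideal.subset_span ⟨x, hx, fun h => hxR ((isEgyptian_iff x).1 h).2, hy⟩
  have hJ : I ≤ Ideal.jacobson ⊥ := by
    rw [hIdef, Ideal.span_le]
    rintro y ⟨x, hx, hE, hy⟩
    exact recip_jacobson x hx (fun h => hE ((isEgyptian_iff x).2 ⟨hx, h⟩)) y hy
  have hI : I ≠ ⊤ := by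
    intro h
    have h1 := Ideal.mem_jacobson_bot.1 (hJ (h ▸ Submodule.mem_top : (1 : _) ∈ I)) (-1)
    simp at h1
  have hunit : ∀ r : ReciprocalComplement T F, ¬ IsUnit r → r ∈ I := by
    intro r hr
    obtain ⟨a, b, ha, hb, hb0, n, hn, h⟩ := exists_quotient_add I hgen r
    rcases eq_or_ne a 0 with rfl | ha0
    · have : r = n := Subtype.ext (by simpa using h)
      exact this ▸ hn
    · refine absurd ?_ hr
      have ha1 := algebraMap_ne_zero_of_ne_zero (F := F) ha0
      have hb1 := algebraMap_ne_zero_of_ne_zero (F := F) hb0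
      let u : ReciprocalComplement T F := ⟨_, mul_mem ha (inv_mem_recip hb0)⟩
      let v : ReciprocalComplement T F := ⟨_, mul_mem hb (inv_mem_recip ha0)⟩
      have huv : u * v = 1 := Subtype.ext (by
        change algebraMap T F a * (algebraMap T F b)⁻¹ *
          (algebraMap T F b * (algebraMap T F a)⁻¹) = 1
        field_simp)
      have hru : r = u + n := Subtype.ext h
      have : r = u * (n * v + 1) := by
        rw [hru]
        linear_combination (-n) * huv
      rw [this]
      exact (IsUnit.of_mul_eq_one v huv).mul (Ideal.mem_jacobson_bot.1 (hJ hn) v)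
  refine ⟨IsLocalRing.of_nonunits_add fun a b ha hb hab => ?_, fun M hM => ?_⟩
  · exact hI (Ideal.eq_top_of_isUnit_mem I (I.add_mem (hunit a ha) (hunit b hb)) hab)
  · exact hM.eq_of_le hI fun r hr =>
      hunit r fun hu => hM.ne_top (Ideal.eq_top_of_isUnit_mem M hr hu)
end

section
/- Let T be an integral domain. Then every prime ideal of the reciprocal complement R(T) is generated (as an ideal of R(T)) by elements of the form 1/f with f a nonzero element of T. -/
namespace ReciprocalComplement

variable {T F : Type*} [CommRing T] [Field F] [Algebra T F]

/-- The reciprocal `1/f` as an element of `R(T)`. It is total in `f`: since `0⁻¹ = 0`, the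
value at `f = 0` is the zero of `R(T)`. -/
def recip (F : Type*) [Field F] [Algebra T F] (f : T) : ReciprocalComplement T F :=
  ⟨(algebraMap T F f)⁻¹, by
    by_cases h : f = 0
    · simp [h]
    · exact Subring.subset_closure ⟨f, h, rfl⟩⟩

@[simp]
theorem coe_recip (f : T) : (recip F f : F) = (algebraMap T F f)⁻¹ := rfl

/-- The additive form of `R(T)`: the nonzero reciprocals form a multiplicative monoid stable
under negation, so sums of them already exhaust the subring they generate. -/
theorem exists_multiset_sum [IsDomain T] (x : ReciprocalComplement T F) :
    ∃ m : Multiset T, (∀ f ∈ m, f ≠ 0) ∧ x = (m.map (recip F)).sum := by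
  suffices H : ∀ y ∈ ReciprocalComplement T F, ∃ m : Multiset T, (∀ f ∈ m, f ≠ 0) ∧
      y = (m.map fun f => (algebraMap T F f)⁻¹).sum by
    obtain ⟨m, hm, hx⟩ := H x x.2
    refine ⟨m, hm, Subtype.ext ?_⟩
    rw [hx, ← Subring.coe_subtype, map_multiset_sum, Multiset.map_map]
    rfl
  intro y hy
  rw [ReciprocalComplement, Subring.mem_closure_iff] at hy
  induction hy using AddSubgroup.closure_induction with
  | mem y hy =>
    have h : ∃ f : T, f ≠ 0 ∧ y = (algebraMap T F f)⁻¹ := by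
      induction hy using Submonoid.closure_induction with
      | mem y hy => exact hy
      | one => exact ⟨1, one_ne_zero, by simp⟩
      | mul a b _ _ ha hb =>
        obtain ⟨f, hf, rfl⟩ := ha
        obtain ⟨g, hg, rfl⟩ := hb
        exact ⟨f * g, mul_ne_zero hf hg, by rw [map_mul, mul_inv]⟩
    obtain ⟨f, hf, rfl⟩ := h
    exact ⟨{f}, by simpa using hf, by simp⟩
  | zero => exact ⟨0, by simp, by simp⟩
  | add a b _ _ ha hb =>
    obtain ⟨m, hm, rfl⟩ := ha
    obtain ⟨k, hk, rfl⟩ := hb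
    refine ⟨m + k, fun f hf => ?_, by simp⟩
    exact (Multiset.mem_add.1 hf).elim (hm f) (hk f)
  | neg a _ ha =>
    obtain ⟨m, hm, rfl⟩ := ha
    refine ⟨m.map Neg.neg, fun f hf => ?_, ?_⟩
    · obtain ⟨g, hg, rfl⟩ := Multiset.mem_map.1 hf
      exact neg_ne_zero.2 (hm g hg)
    · simp [Multiset.map_map, inv_neg]

/-- A sum of reciprocals over the common denominator `t = f₁ ⋯ fₙ`; `t` is carried along,
as the inverse of the product of the reciprocals, because the induction step for `s` needs it. -/
theorem exists_sum_eq_mul_prod [IsDomain T] [IsFractionRing T F] (m : Multiset T)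
    (hm : ∀ f ∈ m, f ≠ 0) :
    ∃ s t : T,
      ((m.map (recip F)).sum : F) = algebraMap T F s * ((m.map (recip F)).prod : F) ∧
      algebraMap T F t * ((m.map (recip F)).prod : F) = 1 := by
  induction m using Multiset.induction_on with
  | empty => exact ⟨0, 1, by simp, by simp⟩
  | cons f m ih =>
    obtain ⟨s, t, hs, ht⟩ := ih fun g hg => hm g (Multiset.mem_cons_of_mem hg)
    have hf : algebraMap T F f ≠ 0 := by
      simpa using hm f (Multiset.mem_cons_self f m)
    refine ⟨t + f * s, f * t, ?_, ?_⟩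
    · simp only [Multiset.map_cons, Multiset.sum_cons, Multiset.prod_cons, Subring.coe_add,
        Subring.coe_mul, coe_recip, map_add, map_mul, hs]
      field_simp
      linear_combination -ht
    · simp only [Multiset.map_cons, Multiset.prod_cons, Subring.coe_mul, coe_recip, map_mul]
      field_simp
      exact ht

/-- Primality forces one summand of a nonzero sum in `P` to lie in `P`; removing it leaves a
shorter sum in `P`, whence the induction on the number `n` of summands. -/
theorem sum_mem_span [IsDomain T] [IsFractionRing T F] (P : Ideal (ReciprocalComplement T F))
    (hP : P.IsPrime) (n : ℕ) (m : Multiset T) (hn : m.card = n) (hm : ∀ f ∈ m, f ≠ 0)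
    (hx : (m.map (recip F)).sum ∈ P) :
    (m.map (recip F)).sum ∈ Ideal.span {y | y ∈ P ∧ ∃ f : T, f ≠ 0 ∧ y = recip F f} := by
  induction n generalizing m with
  | zero => simp [Multiset.card_eq_zero.1 hn]
  | succ n ih =>
    obtain ⟨s, -, hs, -⟩ := exists_sum_eq_mul_prod (F := F) m hm
    by_cases h0 : s = 0
    · have : (m.map (recip F)).sum = 0 := Subtype.ext (by rw [hs, h0]; simp)
      rw [this]
      exact zero_mem _
    have hs0 : algebraMap T F s ≠ 0 := by simpa using h0
    have hprod : (m.map (recip F)).prod ∈ P := by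
      have : (m.map (recip F)).prod = recip F s * (m.map (recip F)).sum := by
        apply Subtype.ext
        rw [Subring.coe_mul, hs, coe_recip, inv_mul_cancel_left₀ hs0]
      rw [this]
      exact P.mul_mem_left _ hx
    obtain ⟨y, hy, hyP⟩ := (hP.multiset_prod_mem_iff_exists_mem _).1 hprod
    obtain ⟨f, hf, rfl⟩ := Multiset.mem_map.1 hy
    obtain ⟨k, rfl⟩ := Multiset.exists_cons_of_mem hf
    rw [Multiset.map_cons, Multiset.sum_cons] at hx ⊢
    refine add_mem (Ideal.subset_span ⟨hyP, f, hm f hf, rfl⟩) (ih k (by simpa using hn) ?_ ?_)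
    · exact fun g hg => hm g (Multiset.mem_cons_of_mem hg)
    · exact (P.add_mem_iff_right hyP).1 hx

end ReciprocalComplement

/-- Every prime ideal of the reciprocal complement `R(T)` of an integral domain `T` is
generated by elements of the form `1/f` with `f` a nonzero element of `T`. -/
theorem prime_ideal_generated_by_reciprocals (T F : Type*) [CommRing T] [IsDomain T]
    [Field F] [Algebra T F] [IsFractionRing T F]
    (P : Ideal (ReciprocalComplement T F)) (hP : P.IsPrime) :
    ∃ G : Set (ReciprocalComplement T F),
      (∀ y ∈ G, ∃ f : T, f ≠ 0 ∧ (y : F) = (algebraMap T F f)⁻¹) ∧ P = Ideal.span G := by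
  refine ⟨{y | y ∈ P ∧ ∃ f : T, f ≠ 0 ∧ y = ReciprocalComplement.recip F f}, ?_, ?_⟩
  · rintro y ⟨-, f, hf, rfl⟩
    exact ⟨f, hf, rfl⟩
  · refine le_antisymm (fun x hx => ?_) (Ideal.span_le.2 fun y hy => hy.1)
    obtain ⟨m, hm, rfl⟩ := ReciprocalComplement.exists_multiset_sum x
    exact ReciprocalComplement.sum_mem_span P hP _ m rfl hm hx
end

section
/- Let L/K be a field extension, let f_1, ..., f_n be nonzero elements of L, and let T = K[f_1, ..., f_n] be the K-subalgebra of L they generate. Then R(T)[∏_{i=1}^n f_i] = Frac(T), the fraction field of T (as subrings of Frac(T)). Consequently, the element 1/∏_{i=1}^n f_i belongs to every nonzero prime ideal of R(T). -/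
theorem inv_mem_reciprocalComplementSet {F : Type*} [Field F] {A : Set F} {a : F} (ha : a ∈ A)
    (h0 : a ≠ 0) : a⁻¹ ∈ ReciprocalComplementSet A :=
  Subring.subset_closure ⟨a, ha, h0, rfl⟩

/-- If `P⁻¹ ∈ R`, then `R[P]` consists of fractions whose denominators are powers of `P⁻¹`. -/
theorem exists_mul_pow_mem_of_mem_closure {F : Type*} [Field F] (R : Subring F) {P : F}
    (hP0 : P ≠ 0) (hP : P⁻¹ ∈ R) {y : F} (hy : y ∈ Subring.closure ((R : Set F) ∪ {P})) :
    ∃ m : ℕ, y * P⁻¹ ^ m ∈ R := by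
  induction hy using Subring.closure_induction with
  | mem x hx =>
    rcases hx with hx | rfl
    · exact ⟨0, by simpa using hx⟩
    · exact ⟨1, by simp [hP0, R.one_mem]⟩
  | zero => exact ⟨0, by simp [R.zero_mem]⟩
  | one => exact ⟨0, by simp [R.one_mem]⟩
  | add x y _ _ hx hy =>
    obtain ⟨m, hm⟩ := hx
    obtain ⟨k, hk⟩ := hy
    refine ⟨m + k, ?_⟩
    have h := R.add_mem (R.mul_mem hm (R.pow_mem hP k)) (R.mul_mem hk (R.pow_mem hP m))
    convert h using 1
    ring
  | neg x _ hx =>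
    obtain ⟨m, hm⟩ := hx
    exact ⟨m, by simpa only [neg_mul] using R.neg_mem hm⟩
  | mul x y _ _ hx hy =>
    obtain ⟨m, hm⟩ := hx
    obtain ⟨k, hk⟩ := hy
    refine ⟨m + k, ?_⟩
    convert R.mul_mem hm hk using 1
    ring

/-- Let `L/K` be a field extension, `f₁, …, fₙ` nonzero elements of `L`, and
`T = K[f₁, …, fₙ]` the `K`-subalgebra of `L` they generate.  Then
`R(T)[∏ fᵢ] = Frac T` (the fraction field of `T` inside `L`), and consequently
`1/∏ fᵢ` belongs to every nonzero prime ideal of `R(T)`. -/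
theorem recip_adjoin_prod_eq_fractionField (K L : Type*) [Field K] [Field L] [Algebra K L]
    (n : ℕ) (f : Fin n → L) (hf : ∀ i, f i ≠ 0) :
    Subring.closure
        ((ReciprocalComplementSet ((Algebra.adjoin K (Set.range f) : Subalgebra K L) : Set L) :
          Set L) ∪ {∏ i, f i})
      = (Subfield.closure ((Algebra.adjoin K (Set.range f) : Subalgebra K L) : Set L)).toSubring
    ∧ ∃ h : (∏ i, f i)⁻¹ ∈
          ReciprocalComplementSet ((Algebra.adjoin K (Set.range f) : Subalgebra K L) : Set L),
        ∀ p : Ideal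
            (ReciprocalComplementSet ((Algebra.adjoin K (Set.range f) : Subalgebra K L) : Set L)),
          p.IsPrime → p ≠ ⊥ → (⟨(∏ i, f i)⁻¹, h⟩ : ReciprocalComplementSet
            ((Algebra.adjoin K (Set.range f) : Subalgebra K L) : Set L)) ∈ p := by
  classical
  set T : Subalgebra K L := Algebra.adjoin K (Set.range f) with hT
  set R := ReciprocalComplementSet (T : Set L) with hR
  set P := ∏ i, f i with hPdef
  have hfT : ∀ i, f i ∈ T := fun i => Algebra.subset_adjoin ⟨i, rfl⟩
  have hP0 : P ≠ 0 := Finset.prod_ne_zero_iff.mpr fun i _ => hf i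
  have hPT : P ∈ T := T.prod_mem fun i _ => hfT i
  have hPR : P⁻¹ ∈ R := inv_mem_reciprocalComplementSet hPT hP0
  set S := Subring.closure ((R : Set L) ∪ {P}) with hS
  have hRS : ∀ x ∈ R, x ∈ S := fun x hx => Subring.subset_closure (Or.inl hx)
  have hPS : P ∈ S := Subring.subset_closure (Or.inr rfl)
  have hTS : ∀ x ∈ T, x ∈ S := by
    intro x hx
    induction hx using Algebra.adjoin_induction with
    | mem x hx =>
      obtain ⟨i, rfl⟩ := hx
      have h : f i = P * ∏ j ∈ Finset.univ.erase i, (f j)⁻¹ := by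
        rw [hPdef, ← Finset.mul_prod_erase _ _ (Finset.mem_univ i), Finset.prod_inv_distrib,
          mul_assoc, mul_inv_cancel₀ (Finset.prod_ne_zero_iff.mpr fun j _ => hf j), mul_one]
      rw [h]
      exact S.mul_mem hPS (S.prod_mem fun j _ =>
        hRS _ (inv_mem_reciprocalComplementSet (hfT j) (hf j)))
    | algebraMap c =>
      by_cases hc : c = 0
      · simp [hc, S.zero_mem]
      · have h : (algebraMap K L c⁻¹)⁻¹ ∈ R :=
          inv_mem_reciprocalComplementSet (T.algebraMap_mem _) (by simpa using hc)
        rw [map_inv₀, inv_inv] at h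
        exact hRS _ h
    | add x y _ _ hx hy => exact S.add_mem hx hy
    | mul x y _ _ hx hy => exact S.mul_mem hx hy
  have hRF : R ≤ (Subfield.closure (T : Set L)).toSubring := by
    refine Subring.closure_le.mpr ?_
    rintro _ ⟨a, ha, -, rfl⟩
    exact (Subfield.closure (T : Set L)).inv_mem (Subfield.subset_closure ha)
  have hEq : S = (Subfield.closure (T : Set L)).toSubring := by
    apply le_antisymm
    · refine Subring.closure_le.mpr (Set.union_subset hRF ?_)
      rintro _ rfl
      exact Subfield.subset_closure hPT
    · intro x hx
      have hcl : Subring.closure (T : Set L) ≤ T.toSubring :=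
        Subring.closure_le.mpr fun _ h => h
      obtain ⟨y, hy, z, hz, rfl⟩ := Subfield.mem_closure_iff.mp hx
      by_cases hz0 : z = 0
      · simp [hz0, S.zero_mem]
      · rw [div_eq_mul_inv]
        exact S.mul_mem (hTS _ (hcl hy))
          (hRS _ (inv_mem_reciprocalComplementSet (hcl hz) hz0))
  refine ⟨hEq, hPR, fun p hp hp0 => ?_⟩
  obtain ⟨x, hxp, hx0⟩ := Submodule.exists_mem_ne_zero_of_ne_bot hp0
  have hx0' : (x : L) ≠ 0 := fun h => hx0 (Subtype.ext h)
  have hxS : (x : L)⁻¹ ∈ S := by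
    rw [hEq]
    exact (Subfield.closure (T : Set L)).inv_mem (hRF x.2)
  obtain ⟨m, hm⟩ := exists_mul_pow_mem_of_mem_closure R hP0 hPR hxS
  refine hp.mem_of_pow_mem m ?_
  have h : (⟨P⁻¹, hPR⟩ : R) ^ m = ⟨_, hm⟩ * x := by
    apply Subtype.ext
    simp only [Subring.coe_pow, Subring.coe_mul]
    field_simp
  rw [h]
  exact p.mul_mem_left _ hxp
end

section
/- Let T be an ℕ-graded commutative integral domain with grading T = ⊕_{d≥0} T_d. Then every Egyptian element of T lies in the degree-zero component T_0. -/
open Polynomial in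
/-- The ring homomorphism `a ↦ ∑ᵢ aᵢ Xⁱ`, where `aᵢ` is the component of `a` in degree `i`. -/
noncomputable def gradedToPolynomial {A : Type*} [CommRing A]
    (𝒜 : ℕ → AddSubgroup A) [GradedRing 𝒜] : A →+* A[X] :=
  (DirectSum.toSemiring
    (fun i => (monomial i : A →ₗ[A] A[X]).toAddMonoidHom.comp (𝒜 i).subtype)
    (by simp) (by intro i j a b; simp [monomial_mul_monomial])).comp
    (DirectSum.decomposeRingEquiv 𝒜).toRingHom

theorem gradedToPolynomial_coe {A : Type*} [CommRing A]
    (𝒜 : ℕ → AddSubgroup A) [GradedRing 𝒜] {i : ℕ} (m : 𝒜 i) :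
    gradedToPolynomial 𝒜 (m : A) = Polynomial.monomial i (m : A) := by
  have h : DirectSum.decomposeRingEquiv 𝒜 (m : A) = DirectSum.of (fun i => 𝒜 i) i m :=
    DirectSum.decompose_coe 𝒜 m
  rw [gradedToPolynomial, RingHom.comp_apply]
  refine (congrArg _ h).trans ?_
  exact DirectSum.toSemiring_of (A := fun i => 𝒜 i) _ _ _ i m

theorem coeff_gradedToPolynomial {A : Type*} [CommRing A]
    (𝒜 : ℕ → AddSubgroup A) [GradedRing 𝒜] (a : A) (n : ℕ) :
    (gradedToPolynomial 𝒜 a).coeff n = (DirectSum.decompose 𝒜 a n : A) := by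
  induction a using DirectSum.Decomposition.inductionOn 𝒜 with
  | zero => simp
  | @homogeneous i m =>
    rw [gradedToPolynomial_coe, Polynomial.coeff_monomial, DirectSum.decompose_coe,
      DirectSum.coe_of_apply]
    split_ifs <;> rfl
  | add a b ha hb => simp [ha, hb]

theorem eval_one_gradedToPolynomial {A : Type*} [CommRing A]
    (𝒜 : ℕ → AddSubgroup A) [GradedRing 𝒜] (a : A) :
    (gradedToPolynomial 𝒜 a).eval 1 = a := by
  induction a using DirectSum.Decomposition.inductionOn 𝒜 with
  | zero => simp
  | @homogeneous i m => simp [gradedToPolynomial_coe]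
  | add a b ha hb => simp [ha, hb]

theorem gradedToPolynomial_ne_zero {A : Type*} [CommRing A]
    (𝒜 : ℕ → AddSubgroup A) [GradedRing 𝒜] {a : A} (ha : a ≠ 0) :
    gradedToPolynomial 𝒜 a ≠ 0 := by
  intro h
  apply ha
  rw [← eval_one_gradedToPolynomial 𝒜 a, h, Polynomial.eval_zero]

/-- A finite sum of reciprocals is a fraction of degree at most zero: the induction step is
`1 / d + N / D = (D + d N) / (d D)`. -/
theorem exists_fraction_natDegree_le {A : Type*} [CommRing A] [IsDomain A]
    (𝒜 : ℕ → AddSubgroup A) [GradedRing 𝒜]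
    (F : Type*) [Field F] [Algebra A F] [IsFractionRing A F]
    (s : Multiset A) (hs : ∀ d ∈ s, d ≠ 0) :
    ∃ N D : A, D ≠ 0 ∧
      (s.map fun d => (algebraMap A F d)⁻¹).sum * algebraMap A F D = algebraMap A F N ∧
      (gradedToPolynomial 𝒜 N).natDegree ≤ (gradedToPolynomial 𝒜 D).natDegree := by
  induction s using Multiset.induction_on with
  | empty => exact ⟨0, 1, one_ne_zero, by simp, by simp⟩
  | cons d s ih =>
    obtain ⟨N, D, hD, hsum, hdeg⟩ := ih fun e he => hs e (Multiset.mem_cons_of_mem he)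
    have hd : d ≠ 0 := hs d (Multiset.mem_cons_self d s)
    have hdF : algebraMap A F d ≠ 0 := by
      simpa using hd
    refine ⟨D + d * N, d * D, mul_ne_zero hd hD, ?_, ?_⟩
    · simp only [Multiset.map_cons, Multiset.sum_cons, map_add, map_mul, ← hsum]
      field_simp
    · rw [map_add, map_mul, map_mul, Polynomial.natDegree_mul
        (gradedToPolynomial_ne_zero 𝒜 hd) (gradedToPolynomial_ne_zero 𝒜 hD)]
      refine Polynomial.natDegree_add_le_of_degree_le (by omega) ?_
      exact Polynomial.natDegree_mul_le.trans (by omega)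

/-- In an `ℕ`-graded integral domain, every Egyptian element lies in the degree-zero
component. -/
theorem egyptian_mem_grade_zero (A : Type*) [CommRing A] [IsDomain A]
    (𝒜 : ℕ → AddSubgroup A) [GradedRing 𝒜]
    (F : Type*) [Field F] [Algebra A F] [IsFractionRing A F]
    (x : A) (hx : IsEgyptian A F x) : x ∈ 𝒜 0 := by
  obtain ⟨hx0, s, hs, hxs⟩ := hx
  obtain ⟨N, D, hD, hsum, hdeg⟩ := exists_fraction_natDegree_le 𝒜 F s hs
  rw [← hxs, ← map_mul] at hsum
  have hN : x * D = N := IsFractionRing.injective A F hsum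
  rw [← hN, map_mul, Polynomial.natDegree_mul
    (gradedToPolynomial_ne_zero 𝒜 hx0) (gradedToPolynomial_ne_zero 𝒜 hD)] at hdeg
  have hconst := Polynomial.eq_C_of_natDegree_eq_zero
    (show (gradedToPolynomial 𝒜 x).natDegree = 0 by omega)
  have hx_eq : x = (DirectSum.decompose 𝒜 x 0 : A) := by
    rw [← coeff_gradedToPolynomial, ← Polynomial.eval_C (x := (1 : A)) (a := Polynomial.coeff _ 0),
      ← hconst, eval_one_gradedToPolynomial]
  rw [hx_eq]
  exact SetLike.coe_mem _
end

section
/- Let K be a field and let 0 ≤ j < n be integers. Inside F_n = K(X_1, ..., X_n), let R_n = R(K[X_1, ..., X_n]) and R_j = R(K[X_1, ..., X_j]) be the reciprocal complements, and let F_j = K(X_1, ..., X_j) be the subfield of F_n generated by K and X_1, ..., X_j. Then R_n ∩ F_j = R_j. -/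
open MvPolynomial in
/-- The `K`-algebra map `K[X] → K[X][T]` fixing `X i` for `i ∈ S` and sending `X i` to `X i * T`
for `i ∉ S`. The `T`-degree of the image of `f` is the total degree of `f` in the variables
outside `S`. -/
noncomputable def scaleHom (K : Type*) [Field K] {σ : Type*} (S : Set σ) :
    MvPolynomial σ K →ₐ[K] Polynomial (MvPolynomial σ K) :=
  open Classical in
  aeval fun i => if i ∈ S then Polynomial.C (X i) else Polynomial.C (X i) * Polynomial.X

section

variable {K : Type*} [Field K] {σ : Type*} (S : Set σ)

theorem eval_one_scaleHom (f : MvPolynomial σ K) : (scaleHom K S f).eval 1 = f := by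
  induction f using MvPolynomial.induction_on with
  | C a =>
    rw [← MvPolynomial.algebraMap_eq, AlgHom.commutes]
    simp [Polynomial.algebraMap_apply]
  | add p q hp hq => simp [hp, hq]
  | mul_X p i hp =>
    rw [map_mul, Polynomial.eval_mul, hp]
    by_cases h : i ∈ S <;> simp [scaleHom, h]

theorem eval_zero_scaleHom_mem (f : MvPolynomial σ K) :
    (scaleHom K S f).eval 0 ∈ MvPolynomial.supported K S := by
  induction f using MvPolynomial.induction_on with
  | C a =>
    rw [← MvPolynomial.algebraMap_eq, AlgHom.commutes]
    simp only [Polynomial.algebraMap_apply, Polynomial.eval_C]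
    exact Subalgebra.algebraMap_mem _ a
  | add p q hp hq =>
    rw [map_add, Polynomial.eval_add]
    exact add_mem hp hq
  | mul_X p i hp =>
    rw [map_mul, Polynomial.eval_mul]
    refine mul_mem hp ?_
    by_cases h : i ∈ S
    · simp [scaleHom, h]
    · simp [scaleHom, h]

theorem scaleHom_ne_zero {f : MvPolynomial σ K} (hf : f ≠ 0) : scaleHom K S f ≠ 0 := by
  intro h
  apply hf
  rw [← eval_one_scaleHom S f, h, Polynomial.eval_zero]

/-- A polynomial of degree zero in the variables outside `S` only involves the variables in `S`:
its image is constant in `T`, so the specialisations at `T = 1` and `T = 0` agree. -/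
theorem mem_supported_of_degree_le_zero {f : MvPolynomial σ K}
    (hf : (scaleHom K S f).degree ≤ 0) : f ∈ MvPolynomial.supported K S := by
  have h0 := eval_zero_scaleHom_mem S f
  have h1 := eval_one_scaleHom S f
  rw [Polynomial.eq_C_of_degree_le_zero hf, Polynomial.eval_C] at h0 h1
  rwa [h1] at h0

theorem scaleHom_of_mem_supported {f : MvPolynomial σ K} (hf : f ∈ MvPolynomial.supported K S) :
    scaleHom K S f = Polynomial.C f := by
  rw [MvPolynomial.supported] at hf
  induction hf using Algebra.adjoin_induction with
  | mem x hx =>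
    obtain ⟨i, hi, rfl⟩ := hx
    simp [scaleHom, hi]
  | algebraMap r => rw [AlgHom.commutes, Polynomial.algebraMap_apply, Polynomial.C_inj]
  | add x y _ _ hx hy => simp [hx, hy]
  | mul x y _ _ hx hy => simp [hx, hy]

variable (F : Type*) [Field F] [Algebra (MvPolynomial σ K) F]
  [IsFractionRing (MvPolynomial σ K) F]

variable (K) in
/-- The maximal ideal of the valuation ring of `-deg`, where `deg` is the degree in the variables
outside `S`: the fractions `a / b` with `deg a < deg b`. Only its additive structure is needed. The
condition `deg a < deg b` already forces `b ≠ 0`. -/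
def smallFractions : AddSubgroup F where
  carrier := {x | ∃ a b : MvPolynomial σ K, (scaleHom K S a).degree < (scaleHom K S b).degree ∧
    x = algebraMap _ F a / algebraMap _ F b}
  zero_mem' := ⟨0, 1, by simp, by simp⟩
  neg_mem' := by
    rintro _ ⟨a, b, h, rfl⟩
    exact ⟨-a, b, by simpa using h, by simp [neg_div]⟩
  add_mem' := by
    rintro _ _ ⟨a, b, h, rfl⟩ ⟨a', b', h', rfl⟩
    have hb : b ≠ 0 := by rintro rfl; simp at h
    have hb' : b' ≠ 0 := by rintro rfl; simp at h'
    have hB := (map_ne_zero_iff _ (IsFractionRing.injective (MvPolynomial σ K) F)).2 hb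
    have hB' := (map_ne_zero_iff _ (IsFractionRing.injective (MvPolynomial σ K) F)).2 hb'
    refine ⟨a * b' + b * a', b * b', ?_, ?_⟩
    · simp only [map_add, map_mul]
      refine (Polynomial.degree_add_le _ _).trans_lt (max_lt ?_ ?_)
      · rw [Polynomial.degree_mul, Polynomial.degree_mul]
        exact WithBot.add_lt_add_right (by simpa using scaleHom_ne_zero S hb') h
      · rw [Polynomial.degree_mul, Polynomial.degree_mul]
        exact WithBot.add_lt_add_left (by simpa using scaleHom_ne_zero S hb) h'
    · rw [div_add_div _ _ hB hB']
      simp only [map_add, map_mul]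

variable {F}

/-- The valuation `-deg` is trivial on fractions of polynomials in the variables of `S`. -/
theorem eq_zero_of_small {x : F} (hx : x ∈ smallFractions K S F) {p q : MvPolynomial σ K}
    (hp : p ∈ MvPolynomial.supported K S) (hq : q ∈ MvPolynomial.supported K S)
    (hpq : algebraMap _ F p / algebraMap _ F q = x) : x = 0 := by
  obtain ⟨a, b, h, hab⟩ := hx
  have hinj := IsFractionRing.injective (MvPolynomial σ K) F
  have hb : b ≠ 0 := by rintro rfl; simp at h
  by_contra hx0
  have hp0 : p ≠ 0 := by rintro rfl; simp [← hpq] at hx0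
  have hq0 : q ≠ 0 := by rintro rfl; simp [← hpq] at hx0
  have e : p * b = a * q := by
    apply hinj
    rw [map_mul, map_mul]
    exact (div_eq_div_iff ((map_ne_zero_iff _ hinj).2 hq0) ((map_ne_zero_iff _ hinj).2 hb)).1
      (hpq.trans hab)
  have e' := congrArg (fun f => (scaleHom K S f).degree) e
  simp only [map_mul, Polynomial.degree_mul, scaleHom_of_mem_supported S hp,
    scaleHom_of_mem_supported S hq, Polynomial.degree_C hp0, Polynomial.degree_C hq0, zero_add,
    add_zero] at e'
  exact h.ne e'.symm

/-- Modulo the maximal ideal of the valuation `-deg`, the reciprocal complement of `K[X]` reduces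
to that of `K[S]`. -/
theorem exists_recip_sub_mem_small {x : F} (hx : x ∈ ReciprocalComplement (MvPolynomial σ K) F) :
    ∃ r ∈ ReciprocalComplementSet (algebraMap (MvPolynomial σ K) F ''
      ↑(MvPolynomial.supported K S)), x - r ∈ smallFractions K S F := by
  have hinj := IsFractionRing.injective (MvPolynomial σ K) F
  rw [ReciprocalComplement, Subring.mem_closure_iff] at hx
  induction hx using AddSubgroup.closure_induction with
  | mem x hx =>
    -- A product of reciprocals is again a reciprocal.
    obtain ⟨f, hf, rfl⟩ : ∃ f : MvPolynomial σ K, f ≠ 0 ∧ x = (algebraMap _ F f)⁻¹ := by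
      induction hx using Submonoid.closure_induction with
      | mem x hx => exact hx
      | one => exact ⟨1, one_ne_zero, by simp⟩
      | mul x y _ _ hx hy =>
        obtain ⟨f, hf, rfl⟩ := hx
        obtain ⟨g, hg, rfl⟩ := hy
        exact ⟨f * g, mul_ne_zero hf hg, by rw [map_mul, mul_inv]⟩
    by_cases hd : (scaleHom K S f).degree ≤ 0
    · refine ⟨_, Subring.subset_closure ⟨_, ⟨f, mem_supported_of_degree_le_zero S hd, rfl⟩,
        (map_ne_zero_iff _ hinj).2 hf, rfl⟩, ?_⟩
      rw [sub_self]
      exact zero_mem _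
    · exact ⟨0, zero_mem _, 1, f, by simpa using hd, by simp⟩
  | zero => exact ⟨0, zero_mem _, by simp⟩
  | add x y _ _ hx hy =>
    obtain ⟨r, hr, hx⟩ := hx
    obtain ⟨s, hs, hy⟩ := hy
    exact ⟨r + s, add_mem hr hs, by rw [add_sub_add_comm]; exact add_mem hx hy⟩
  | neg x _ hx =>
    obtain ⟨r, hr, hx⟩ := hx
    exact ⟨-r, neg_mem hr, by rw [← neg_sub']; exact neg_mem hx⟩

omit [IsFractionRing (MvPolynomial σ K) F] in
/-- The subfield `K(S)` consists of the fractions of elements of `K[S]`. -/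
theorem exists_supported_div {x : F} (hx : x ∈ Subfield.closure
    (Set.range (fun c : K => algebraMap (MvPolynomial σ K) F (MvPolynomial.C c)) ∪
      (fun i : σ => algebraMap (MvPolynomial σ K) F (MvPolynomial.X i)) '' S)) :
    ∃ p ∈ MvPolynomial.supported K S, ∃ q ∈ MvPolynomial.supported K S,
      algebraMap _ F p / algebraMap _ F q = x := by
  have key : Subring.closure
      (Set.range (fun c : K => algebraMap (MvPolynomial σ K) F (MvPolynomial.C c)) ∪
        (fun i : σ => algebraMap (MvPolynomial σ K) F (MvPolynomial.X i)) '' S) ≤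
      (MvPolynomial.supported K S).toSubring.map (algebraMap (MvPolynomial σ K) F) := by
    rw [Subring.closure_le]
    rintro _ (⟨c, rfl⟩ | ⟨i, hi, rfl⟩)
    · exact ⟨_, Subalgebra.algebraMap_mem (MvPolynomial.supported K S) c, rfl⟩
    · exact ⟨_, MvPolynomial.X_mem_supported.2 hi, rfl⟩
  obtain ⟨y, hy, z, hz, rfl⟩ := Subfield.mem_closure_iff.1 hx
  obtain ⟨p, hp, rfl⟩ := key hy
  obtain ⟨q, hq, rfl⟩ := key hz
  exact ⟨p, hp, q, hq, rfl⟩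

omit [IsFractionRing (MvPolynomial σ K) F] in
theorem algebraMap_supported_mem {f : MvPolynomial σ K} (hf : f ∈ MvPolynomial.supported K S) :
    algebraMap _ F f ∈ Subfield.closure
    (Set.range (fun c : K => algebraMap (MvPolynomial σ K) F (MvPolynomial.C c)) ∪
      (fun i : σ => algebraMap (MvPolynomial σ K) F (MvPolynomial.X i)) '' S) := by
  rw [MvPolynomial.supported] at hf
  induction hf using Algebra.adjoin_induction with
  | mem x hx =>
    obtain ⟨i, hi, rfl⟩ := hx
    exact Subfield.subset_closure (Or.inr ⟨i, hi, rfl⟩)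
  | algebraMap r => exact Subfield.subset_closure (Or.inl ⟨r, rfl⟩)
  | add x y _ _ hx hy => rw [map_add]; exact add_mem hx hy
  | mul x y _ _ hx hy => rw [map_mul]; exact mul_mem hx hy

end

/-- For `0 ≤ j < n`, inside `Fₙ = K(X₁, …, Xₙ)` we have `Rₙ ∩ Fⱼ = Rⱼ`, where `Rₙ` is the
reciprocal complement of `K[X₁, …, Xₙ]`, `Fⱼ` is the subfield generated by `K` and
`X₁, …, Xⱼ`, and `Rⱼ` is the reciprocal complement of `K[X₁, …, Xⱼ]` (viewed inside `Fₙ`). -/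
theorem recip_inter_subfield (K : Type*) [Field K] (n j : ℕ) (hj : j < n)
    (F : Type*) [Field F] [Algebra (MvPolynomial (Fin n) K) F]
    [IsFractionRing (MvPolynomial (Fin n) K) F] :
    ReciprocalComplement (MvPolynomial (Fin n) K) F ⊓
      (Subfield.closure
        (Set.range (fun c : K => algebraMap (MvPolynomial (Fin n) K) F (MvPolynomial.C c)) ∪
          (fun i : Fin n => algebraMap (MvPolynomial (Fin n) K) F (MvPolynomial.X i)) ''
            {i : Fin n | (i : ℕ) < j})).toSubring
      = ReciprocalComplementSet
          (algebraMap (MvPolynomial (Fin n) K) F ''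
            ↑(MvPolynomial.supported K {i : Fin n | (i : ℕ) < j})) := by
  have hle : ReciprocalComplementSet (algebraMap (MvPolynomial (Fin n) K) F ''
      ↑(MvPolynomial.supported K {i : Fin n | (i : ℕ) < j})) ≤ (Subfield.closure
        (Set.range (fun c : K => algebraMap (MvPolynomial (Fin n) K) F (MvPolynomial.C c)) ∪
          (fun i : Fin n => algebraMap (MvPolynomial (Fin n) K) F (MvPolynomial.X i)) ''
            {i : Fin n | (i : ℕ) < j})).toSubring := by
    refine Subring.closure_le.2 ?_
    rintro _ ⟨_, ⟨f, hf, rfl⟩, _, rfl⟩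
    exact Subfield.inv_mem _ (algebraMap_supported_mem _ hf)
  apply le_antisymm
  · rintro x ⟨hxR, hxF⟩
    obtain ⟨r, hr, hm⟩ := exists_recip_sub_mem_small {i : Fin n | (i : ℕ) < j} hxR
    have hrF := hle hr
    obtain ⟨p, hp, q, hq, hpq⟩ := exists_supported_div _ (sub_mem hxF hrF)
    rwa [sub_eq_zero.1 (eq_zero_of_small _ hm hp hq hpq)]
  · refine le_inf ?_ hle
    refine Subring.closure_mono ?_
    rintro _ ⟨_, ⟨f, _, rfl⟩, hf0, rfl⟩
    exact ⟨f, by rintro rfl; simp at hf0, rfl⟩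
end

section
/- Let K be a field, n ≥ 1, F = K(X_1, ..., X_n), R = R(K[X_1, ..., X_n]) the reciprocal complement, σ the unique K-algebra automorphism of F with σ(X_i) = 1/X_i for all i, and R* = σ(R). If f ∈ K[X_1, ..., X_n] has nonzero constant term (i.e., f(0, ..., 0) ≠ 0), then f is a unit of R*. Consequently, the localization K[X_1, ..., X_n]_{(X_1, ..., X_n)} (viewed as a subring of F) is contained in R*. -/
open MvPolynomial

/-- The cancellation step: `b * (r / a) = r - t * (x * r / a)` when `a - b = x * t`. -/
lemma div_mem_of_mul_div_mem {F : Type*} [Field F] (S : Subring F) {a b x t r : F}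
    (ha : a ≠ 0) (hb : b ≠ 0) (hbi : b⁻¹ ∈ S) (ht : t ∈ S) (hr : r ∈ S) (hab : a - b = x * t)
    (h : x * r / a ∈ S) : r / a ∈ S := by
  have key : r / a = b⁻¹ * (r - t * (x * r / a)) := by
    field_simp
    linear_combination -r * hab
  rw [key]
  exact S.mul_mem hbi (S.sub_mem hr (S.mul_mem ht h))

/-- Setting `Xᵢ = 0` in a polynomial in the variables `T` gives a polynomial in the variables
`T \ {i}`, congruent to it modulo `Xᵢ`. -/
lemma exists_supported_diff {K ι : Type*} [Field K] (T : Set ι) (i : ι) (h : MvPolynomial ι K)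
    (hh : h ∈ supported K T) : ∃ b ∈ supported K (T \ {i}), X i ∣ h - b := by
  induction hh using Algebra.adjoin_induction with
  | mem x hx =>
    obtain ⟨j, hj, rfl⟩ := hx
    by_cases hji : j = i
    · exact ⟨0, zero_mem _, by simp [hji]⟩
    · exact ⟨X j, Algebra.subset_adjoin ⟨j, ⟨hj, hji⟩, rfl⟩, by simp⟩
  | algebraMap c => exact ⟨_, Subalgebra.algebraMap_mem _ c, by simp⟩
  | add x y _ _ hx hy =>
    obtain ⟨b, hb, hxb⟩ := hx
    obtain ⟨c, hc, hyc⟩ := hy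
    exact ⟨b + c, add_mem hb hc, by rw [add_sub_add_comm]; exact dvd_add hxb hyc⟩
  | mul x y _ _ hx hy =>
    obtain ⟨b, hb, hxb⟩ := hx
    obtain ⟨c, hc, hyc⟩ := hy
    refine ⟨b * c, mul_mem hb hc, ?_⟩
    have : x * y - b * c = (x - b) * y + b * (y - c) := by ring
    rw [this]
    exact dvd_add (hxb.mul_right y) (hyc.mul_left b)

section Rstar

variable {K : Type*} [Field K] {ι : Type*} {F : Type*} [Field F]
  [Algebra (MvPolynomial ι K) F] (σ : F ≃+* F)

/-- `1 / σ(g) = σ(1/g)` lies in `R*`. -/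
lemma inv_mem_map {g : MvPolynomial ι K} (hg : g ≠ 0) :
    (σ (algebraMap (MvPolynomial ι K) F g))⁻¹ ∈
      Subring.map (σ : F →+* F) (ReciprocalComplement (MvPolynomial ι K) F) :=
  ⟨_, Subring.subset_closure ⟨g, hg, rfl⟩, by simp⟩

/-- `R*` contains the polynomials: `σ(1/Xᵢ) = Xᵢ`, and a nonzero constant `c` is the reciprocal of
`c⁻¹`. -/
lemma algebraMap_mem_map
    (hσC : ∀ c : K, σ (algebraMap (MvPolynomial ι K) F (C c)) =
      algebraMap (MvPolynomial ι K) F (C c))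
    (hσX : ∀ i : ι, σ (algebraMap (MvPolynomial ι K) F (X i)) =
      (algebraMap (MvPolynomial ι K) F (X i))⁻¹)
    (f : MvPolynomial ι K) : algebraMap (MvPolynomial ι K) F f ∈
    Subring.map (σ : F →+* F) (ReciprocalComplement (MvPolynomial ι K) F) := by
  induction f using MvPolynomial.induction_on with
  | C c =>
    by_cases hc : c = 0
    · simp [hc]
    · have := inv_mem_map (F := F) σ (C_ne_zero.2 (inv_ne_zero hc) : (C c⁻¹ : MvPolynomial ι K) ≠ 0)
      rw [hσC] at this
      convert this using 1
      apply eq_inv_of_mul_eq_one_left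
      rw [← map_mul, ← C_mul, mul_inv_cancel₀ hc, C_1, map_one]
  | add p q hp hq => rw [map_add]; exact add_mem hp hq
  | mul_X p i hp =>
    rw [map_mul]
    refine mul_mem hp ?_
    have := inv_mem_map (F := F) σ (X_ne_zero i : (X i : MvPolynomial ι K) ≠ 0)
    rwa [hσX, inv_inv] at this

/-- Clearing denominators in `σ h = h(1/X)`. The monomials in the variables `T` are encoded as the
submonoid generated by these variables. -/
lemma exists_clear_denom [IsFractionRing (MvPolynomial ι K) F]
    (hσC : ∀ c : K, σ (algebraMap (MvPolynomial ι K) F (C c)) =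
      algebraMap (MvPolynomial ι K) F (C c))
    (hσX : ∀ i : ι, σ (algebraMap (MvPolynomial ι K) F (X i)) =
      (algebraMap (MvPolynomial ι K) F (X i))⁻¹)
    (T : Set ι) (h : MvPolynomial ι K) (hh : h ∈ supported K T) :
    ∃ m ∈ Submonoid.closure ((X : ι → MvPolynomial ι K) '' T), ∃ g : MvPolynomial ι K,
      σ (algebraMap _ F h) * algebraMap _ F m = algebraMap _ F g := by
  induction hh using Algebra.adjoin_induction with
  | mem x hx =>
    obtain ⟨j, hj, rfl⟩ := hx
    refine ⟨X j, Submonoid.subset_closure ⟨j, hj, rfl⟩, 1, ?_⟩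
    rw [hσX, map_one, inv_mul_cancel₀]
    simp [X_ne_zero]
  | algebraMap c => exact ⟨1, one_mem _, C c, by rw [map_one, mul_one]; exact hσC c⟩
  | add x y _ _ hx hy =>
    obtain ⟨m, hm, g, hg⟩ := hx
    obtain ⟨m', hm', g', hg'⟩ := hy
    refine ⟨m * m', mul_mem hm hm', g * m' + g' * m, ?_⟩
    simp only [map_add, map_mul, ← hg, ← hg']
    ring
  | mul x y _ _ hx hy =>
    obtain ⟨m, hm, g, hg⟩ := hx
    obtain ⟨m', hm', g', hg'⟩ := hy
    refine ⟨m * m', mul_mem hm hm', g * g', ?_⟩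
    simp only [map_mul, ← hg, ← hg']
    ring

lemma involutive_algebraMap
    (hσC : ∀ c : K, σ (algebraMap (MvPolynomial ι K) F (C c)) =
      algebraMap (MvPolynomial ι K) F (C c))
    (hσX : ∀ i : ι, σ (algebraMap (MvPolynomial ι K) F (X i)) =
      (algebraMap (MvPolynomial ι K) F (X i))⁻¹)
    (f : MvPolynomial ι K) :
    σ (σ (algebraMap _ F f)) = algebraMap _ F f := by
  have : ((σ : F →+* F).comp (σ : F →+* F)).comp (algebraMap (MvPolynomial ι K) F) =
      algebraMap (MvPolynomial ι K) F := by
    apply MvPolynomial.ringHom_ext <;> intros <;> simp [hσC, hσX]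
  exact RingHom.congr_fun this f

/-- With `σ h * m = g`, the element `σ(1/g)` of `R*` equals `m / h`, since `σ m = 1/m`. -/
lemma exists_monomial_div_mem [IsFractionRing (MvPolynomial ι K) F]
    (hσC : ∀ c : K, σ (algebraMap (MvPolynomial ι K) F (C c)) =
      algebraMap (MvPolynomial ι K) F (C c))
    (hσX : ∀ i : ι, σ (algebraMap (MvPolynomial ι K) F (X i)) =
      (algebraMap (MvPolynomial ι K) F (X i))⁻¹)
    (T : Set ι) (h : MvPolynomial ι K) (hh : h ∈ supported K T)
    (h0 : h ≠ 0) : ∃ m ∈ Submonoid.closure ((X : ι → MvPolynomial ι K) '' T),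
      algebraMap _ F m / algebraMap _ F h ∈
        Subring.map (σ : F →+* F) (ReciprocalComplement (MvPolynomial ι K) F) := by
  obtain ⟨m, hm, g, hg⟩ := exists_clear_denom (F := F) σ hσC hσX T h hh
  have hσm : m ≠ 0 ∧ σ (algebraMap _ F m) = (algebraMap _ F m)⁻¹ := by
    clear hg
    induction hm using Submonoid.closure_induction with
    | mem x hx => obtain ⟨j, _, rfl⟩ := hx; exact ⟨X_ne_zero j, hσX j⟩
    | one => simp
    | mul x y _ _ hx hy =>
      exact ⟨mul_ne_zero hx.1 hy.1, by simp only [map_mul, hx.2, hy.2, mul_inv]⟩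
  have hg0 : g ≠ 0 := by
    rintro rfl
    simp [h0, hσm.1] at hg
  refine ⟨m, hm, ?_⟩
  have := inv_mem_map (F := F) σ hg0
  rwa [← hg, map_mul, involutive_algebraMap σ hσC hσX, hσm.2, mul_inv, inv_inv, mul_comm,
    ← div_eq_mul_inv] at this

/-- The reciprocal of a polynomial with nonzero constant term lies in `R*`; by strong induction on
a finite set `T` containing its variables. -/
lemma inv_mem_of_supported [IsFractionRing (MvPolynomial ι K) F]
    (hσC : ∀ c : K, σ (algebraMap (MvPolynomial ι K) F (C c)) =
      algebraMap (MvPolynomial ι K) F (C c))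
    (hσX : ∀ i : ι, σ (algebraMap (MvPolynomial ι K) F (X i)) =
      (algebraMap (MvPolynomial ι K) F (X i))⁻¹)
    (T : Finset ι) : ∀ h ∈ supported K (T : Set ι),
    eval (0 : ι → K) h ≠ 0 → (algebraMap _ F h)⁻¹ ∈
      Subring.map (σ : F →+* F) (ReciprocalComplement (MvPolynomial ι K) F) := by
  classical
  induction T using Finset.strongInduction with
  | H T ih =>
    intro h hh h0
    have hne : ∀ {p : MvPolynomial ι K}, eval (0 : ι → K) p ≠ 0 → algebraMap _ F p ≠ 0 := by
      intro p hp hp'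
      have : p = 0 := by simpa using hp'
      simp [this] at hp
    have hh0 : h ≠ 0 := by rintro rfl; simp at h0
    obtain ⟨m, hm, hmem⟩ := exists_monomial_div_mem (F := F) σ hσC hσX T h hh hh0
    -- Cancel the variables of `m` successively, for an arbitrary polynomial cofactor `r`.
    have cancel : ∀ r : MvPolynomial ι K,
        algebraMap _ F (m * r) / algebraMap _ F h ∈
          Subring.map (σ : F →+* F) (ReciprocalComplement (MvPolynomial ι K) F) →
        algebraMap _ F r / algebraMap _ F h ∈
          Subring.map (σ : F →+* F) (ReciprocalComplement (MvPolynomial ι K) F) := by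
      clear hmem
      induction hm using Submonoid.closure_induction with
      | mem x hx =>
        obtain ⟨i, hi, rfl⟩ := hx
        intro r hr
        obtain ⟨b, hb, t, ht⟩ := exists_supported_diff (T : Set ι) i h hh
        have hb0 : eval (0 : ι → K) b ≠ 0 := by
          have := congrArg (eval (0 : ι → K)) ht
          simp only [map_sub, map_mul, eval_X, Pi.zero_apply, zero_mul, sub_eq_zero] at this
          rwa [← this]
        refine div_mem_of_mul_div_mem _ (hne h0) (hne hb0)
          (ih (T.erase i) (Finset.erase_ssubset hi) b (by rwa [Finset.coe_erase]) hb0)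
          (algebraMap_mem_map σ hσC hσX t) (algebraMap_mem_map σ hσC hσX r)
          (x := algebraMap (MvPolynomial ι K) F (X i)) ?_ ?_
        · rw [← map_sub (algebraMap (MvPolynomial ι K) F), ht, map_mul]
        · rwa [← map_mul (algebraMap (MvPolynomial ι K) F)]
      | one => intro r hr; rwa [one_mul] at hr
      | mul x y _ _ hx hy => intro r hr; exact hy r (hx _ (by rwa [← mul_assoc]))
    simpa using cancel 1 (by simpa using hmem)

end Rstar

/-- Let `σ` be the (unique) `K`-algebra automorphism of `F = K(X₁, …, Xₙ)` with
`σ(Xᵢ) = 1/Xᵢ`, and let `R* = σ(R)` where `R` is the reciprocal complement of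
`K[X₁, …, Xₙ]`.  If `f ∈ K[X₁, …, Xₙ]` has nonzero constant term, then `f` is a unit of
`R*`.  Consequently, the localization `K[X₁, …, Xₙ]_{(X₁, …, Xₙ)}`, viewed inside `F` as
the set of fractions `f/g` with `g ∉ (X₁, …, Xₙ)`, is contained in `R*`. -/
theorem nonzero_constant_term_isUnit_in_Rstar (K : Type*) [Field K] (n : ℕ) (hn : 1 ≤ n)
    (F : Type*) [Field F] [Algebra (MvPolynomial (Fin n) K) F]
    [IsFractionRing (MvPolynomial (Fin n) K) F]
    (σ : F ≃+* F)
    (hσC : ∀ c : K, σ (algebraMap (MvPolynomial (Fin n) K) F (MvPolynomial.C c)) =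
      algebraMap (MvPolynomial (Fin n) K) F (MvPolynomial.C c))
    (hσX : ∀ i : Fin n, σ (algebraMap (MvPolynomial (Fin n) K) F (MvPolynomial.X i)) =
      (algebraMap (MvPolynomial (Fin n) K) F (MvPolynomial.X i))⁻¹) :
    (∀ f : MvPolynomial (Fin n) K, MvPolynomial.eval (0 : Fin n → K) f ≠ 0 →
      ∃ h : algebraMap (MvPolynomial (Fin n) K) F f ∈
          Subring.map (σ : F →+* F) (ReciprocalComplement (MvPolynomial (Fin n) K) F),
        IsUnit (⟨algebraMap (MvPolynomial (Fin n) K) F f, h⟩ :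
          Subring.map (σ : F →+* F) (ReciprocalComplement (MvPolynomial (Fin n) K) F)))
    ∧ ∀ f g : MvPolynomial (Fin n) K,
        g ∉ Ideal.span (Set.range (MvPolynomial.X (σ := Fin n) (R := K))) →
        algebraMap (MvPolynomial (Fin n) K) F f / algebraMap (MvPolynomial (Fin n) K) F g ∈
          Subring.map (σ : F →+* F) (ReciprocalComplement (MvPolynomial (Fin n) K) F) := by
  have key : ∀ f : MvPolynomial (Fin n) K, eval (0 : Fin n → K) f ≠ 0 →
      (algebraMap _ F f)⁻¹ ∈
        Subring.map (σ : F →+* F) (ReciprocalComplement (MvPolynomial (Fin n) K) F) :=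
    fun f hf => inv_mem_of_supported σ hσC hσX Finset.univ f (by simp) hf
  refine ⟨fun f hf => ⟨algebraMap_mem_map σ hσC hσX f, ?_⟩, fun f g hg => ?_⟩
  · have hf0 : algebraMap _ F f ≠ 0 := by
      intro h
      have : f = 0 := by simpa using h
      simp [this] at hf
    exact IsUnit.of_mul_eq_one ⟨_, key f hf⟩ (Subtype.ext (mul_inv_cancel₀ hf0))
  · rw [div_eq_mul_inv]
    refine mul_mem (algebraMap_mem_map σ hσC hσX f) (key g fun h0 => hg ?_)
    rw [← Set.image_univ, mem_ideal_span_X_image]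
    intro m hm
    by_contra! hcon
    have hm0 : m = 0 := Finsupp.ext fun i => hcon i trivial
    rw [mem_support_iff, hm0] at hm
    exact hm (by rw [← constantCoeff_eq, ← eval_zero]; exact h0)
end

section
/- Let K be a field and n ≥ 1. Then the reciprocal complement R = R(K[X_1, ..., X_n]) is atomic: every nonzero nonunit element of R is a finite product of irreducible elements of R. -/
namespace RecipAtomic

open MvPolynomial

variable {K : Type*} [Field K] {n : ℕ} {F : Type*} [Field F] [Algebra (MvPolynomial (Fin n) K) F]

/-- The reciprocal `1/f` as an element of the reciprocal complement, with `1/0 = 0`. -/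
noncomputable def rc (F : Type*) [Field F] [Algebra (MvPolynomial (Fin n) K) F]
    (f : MvPolynomial (Fin n) K) : ReciprocalComplement (MvPolynomial (Fin n) K) F :=
  ⟨(algebraMap _ F f)⁻¹, by
    by_cases h : f = 0
    · simp [h, zero_mem]
    · exact Subring.subset_closure ⟨f, h, rfl⟩⟩

@[simp] lemma coe_rc (f : MvPolynomial (Fin n) K) :
    (rc F f : F) = (algebraMap _ F f)⁻¹ := rfl

/-- `DegDrop x k` says that `x` is a nonzero fraction `p / q` of polynomials with
`deg q - deg p = k`, that is, `x` has value `k` for the valuation `-deg`. -/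
def DegDrop (x : F) (k : ℕ) : Prop :=
  ∃ p q : MvPolynomial (Fin n) K, p ≠ 0 ∧ q ≠ 0 ∧ x * algebraMap _ F q = algebraMap _ F p ∧
    p.totalDegree + k = q.totalDegree

/-- Every element of `R` is a constant (encoded as the reciprocal of a constant, with `1/0 = 0`)
plus a sum of reciprocals of nonconstant polynomials. -/
lemma exists_rep (a : ReciprocalComplement (MvPolynomial (Fin n) K) F) :
    ∃ (d : K) (s : Multiset (MvPolynomial (Fin n) K)), (∀ f ∈ s, 0 < f.totalDegree) ∧
      a = rc F (C d) + (s.map (rc F)).sum := by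
  obtain ⟨x, hx⟩ := a
  suffices H : ∃ (d : K) (s : Multiset (MvPolynomial (Fin n) K)), (∀ f ∈ s, 0 < f.totalDegree) ∧
      x = (rc F (C d) + (s.map (rc F)).sum :
        ReciprocalComplement (MvPolynomial (Fin n) K) F) by
    obtain ⟨d, s, h1, h2⟩ := H
    exact ⟨d, s, h1, Subtype.ext h2⟩
  rw [ReciprocalComplement, Subring.mem_closure_iff] at hx
  induction hx using AddSubgroup.closure_induction with
  | mem x hx =>
    have : ∃ f : MvPolynomial (Fin n) K, x = (algebraMap _ F f)⁻¹ := by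
      induction hx using Submonoid.closure_induction with
      | mem x hx => obtain ⟨f, -, h⟩ := hx; exact ⟨f, h⟩
      | one => exact ⟨1, by simp⟩
      | mul x y _ _ hx hy =>
        obtain ⟨f, rfl⟩ := hx
        obtain ⟨g, rfl⟩ := hy
        exact ⟨f * g, by simp [mul_comm]⟩
    obtain ⟨f, rfl⟩ := this
    by_cases hf : f.totalDegree = 0
    · rw [totalDegree_eq_zero_iff_eq_C] at hf
      exact ⟨f.coeff 0, 0, by simp, by rw [← hf]; simp⟩
    · exact ⟨0, {f}, by simpa using Nat.pos_of_ne_zero hf, by simp⟩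
  | zero => exact ⟨0, 0, by simp, by simp⟩
  | add x y _ _ hx hy =>
    obtain ⟨d, s, hs, rfl⟩ := hx
    obtain ⟨e, t, ht, rfl⟩ := hy
    refine ⟨(d⁻¹ + e⁻¹)⁻¹, s + t, ?_, ?_⟩
    · intro f hf
      rcases Multiset.mem_add.1 hf with h | h
      exacts [hs f h, ht f h]
    · have hC : ∀ d : K, (algebraMap (MvPolynomial (Fin n) K) F (C d))⁻¹
          = ((algebraMap (MvPolynomial (Fin n) K) F).comp C) d⁻¹ := by
        intro d
        rw [map_inv₀]; rfl
      simp only [Subring.coe_add, coe_rc, hC, inv_inv, Multiset.map_add, Multiset.sum_add, map_add]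
      ring
  | neg x _ hx =>
    obtain ⟨d, s, hs, rfl⟩ := hx
    refine ⟨-d, s.map (fun f => -f), ?_, ?_⟩
    · intro f hf
      obtain ⟨g, hg, rfl⟩ := Multiset.mem_map.1 hf
      simpa using hs g hg
    · have h : ∀ f : MvPolynomial (Fin n) K, rc F (-f) = -rc F f := by
        intro f
        ext
        simp [inv_neg]
      rw [← Subring.coe_neg, Multiset.map_map]
      congr 1
      simp only [Function.comp_def, h, C_neg]
      rw [neg_add, add_right_inj, Multiset.sum_map_neg]

variable [IsFractionRing (MvPolynomial (Fin n) K) F]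

/-- A sum of reciprocals of nonconstant polynomials has negative degree. For `n ≥ 1` this includes
the empty sum, as `0 = 0 / X₁`. -/
lemma sum_deg (hn : 1 ≤ n) (s : Multiset (MvPolynomial (Fin n) K))
    (hs : ∀ f ∈ s, 0 < f.totalDegree) :
    ∃ p q : MvPolynomial (Fin n) K, p.totalDegree < q.totalDegree ∧
      ((s.map (rc F)).sum : ReciprocalComplement (MvPolynomial (Fin n) K) F)
        * algebraMap _ F q = algebraMap _ F p := by
  induction s using Multiset.induction_on with
  | empty => exact ⟨0, X ⟨0, hn⟩, by simp, by simp⟩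
  | cons f s ih =>
    obtain ⟨p, q, hd, h⟩ := ih fun g hg => hs g (Multiset.mem_cons_of_mem hg)
    have hf := hs f (Multiset.mem_cons_self f s)
    have hf0 : f ≠ 0 := by rintro rfl; simp at hf
    have hq0 : q ≠ 0 := by rintro rfl; simp at hd
    have hf0' : algebraMap _ F f ≠ 0 := by simpa using hf0
    refine ⟨q + f * p, f * q, ?_, ?_⟩
    · rw [totalDegree_mul_of_isDomain hf0 hq0]
      have h1 := totalDegree_add q (f * p)
      have h2 := totalDegree_mul f p
      have h3 : max q.totalDegree (f * p).totalDegree < f.totalDegree + q.totalDegree :=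
        max_lt (by omega) (by omega)
      omega
    · simp only [Multiset.map_cons, Multiset.sum_cons, Subring.coe_add, coe_rc, map_add, map_mul,
        ← h]
      field_simp

/-- A nonzero constant plus a sum of reciprocals of nonconstant polynomials has degree `0`. -/
lemma degDrop_const_add_sum (hn : 1 ≤ n) {d : K} (hd : d ≠ 0)
    (s : Multiset (MvPolynomial (Fin n) K)) (hs : ∀ f ∈ s, 0 < f.totalDegree) :
    DegDrop (K := K) (n := n)
      ((rc F (C d) + (s.map (rc F)).sum : ReciprocalComplement (MvPolynomial (Fin n) K) F) : F)
      0 := by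
  obtain ⟨p, q, hlt, h⟩ := sum_deg (F := F) hn s hs
  have hC0 : (C d : MvPolynomial (Fin n) K) ≠ 0 := by simpa using hd
  have hq0 : q ≠ 0 := by rintro rfl; simp at hlt
  have hd' : algebraMap _ F (C d : MvPolynomial (Fin n) K) ≠ 0 := by simpa using hC0
  have hdeg : (C d * q).totalDegree = q.totalDegree := by
    rw [totalDegree_mul_of_isDomain hC0 hq0]; simp
  have hdp : (C d * p).totalDegree < q.totalDegree := by
    have := totalDegree_mul (C d) p
    simp at this; omega
  have hnum : (q + C d * p).totalDegree = q.totalDegree :=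
    totalDegree_add_eq_left_of_totalDegree_lt hdp
  refine ⟨q + C d * p, C d * q, ?_, mul_ne_zero hC0 hq0, ?_, ?_⟩
  · intro h0
    rw [h0] at hnum
    simp at hnum; omega
  · simp only [Subring.coe_add, coe_rc, map_add, map_mul, ← h]
    field_simp
  · rw [hnum, hdeg, add_zero]

/-- An element `c + ∑ 1/fᵢ` with `c ≠ 0` is coprime to each `1/fᵢ` by induction on the number of
terms, and it divides `∏ 1/fᵢ`; so it is a unit. -/
lemma isUnit_const_add_sum (hn : 1 ≤ n) {d : K} (hd : d ≠ 0)
    (s : Multiset (MvPolynomial (Fin n) K)) (hs : ∀ f ∈ s, 0 < f.totalDegree) :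
    IsUnit (rc F (C d) + (s.map (rc F)).sum) := by
  classical
  induction s using Multiset.strongInductionOn with
  | ih s ih =>
  set u := rc F (C d) + (s.map (rc F)).sum with hu
  have hcop : ∀ f ∈ s, IsCoprime u (rc F f) := by
    intro f hf
    have h1 := ih (s.erase f) (Multiset.erase_lt.2 hf)
      fun g hg => hs g (Multiset.mem_of_mem_erase hg)
    have h2 : rc F (C d) + ((s.erase f).map (rc F)).sum = u - rc F f := by
      rw [hu]
      conv_rhs => rw [← Multiset.cons_erase hf]
      simp only [Multiset.map_cons, Multiset.sum_cons]
      ring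
    rw [h2] at h1
    obtain ⟨w, hw⟩ := h1.exists_left_inv
    exact ⟨w, -w, by rw [← hw]; ring⟩
  have hprod : ∀ t : Multiset (MvPolynomial (Fin n) K), (∀ f ∈ t, IsCoprime u (rc F f)) →
      IsCoprime u (rc F t.prod) := by
    intro t
    induction t using Multiset.induction_on with
    | empty =>
      intro _
      have : rc F (1 : MvPolynomial (Fin n) K) = 1 := by ext; simp
      rw [Multiset.prod_zero, this]
      exact isCoprime_one_right
    | cons f t iht =>
      intro h
      have : rc F (f ::ₘ t).prod = rc F f * rc F t.prod := by
        ext; simp [mul_comm]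
      rw [this]
      exact (h f (Multiset.mem_cons_self f t)).mul_right
        (iht fun g hg => h g (Multiset.mem_cons_of_mem hg))
  -- Clearing denominators: `d * ∏ f` times `1/d + ∑ 1/f` is a polynomial.
  have hclear : ∀ t : Multiset (MvPolynomial (Fin n) K), (∀ f ∈ t, f ≠ 0) →
      ∃ g : MvPolynomial (Fin n) K,
        ((rc F (C d) + (t.map (rc F)).sum : ReciprocalComplement (MvPolynomial (Fin n) K) F) : F)
          * algebraMap _ F (C d * t.prod) = algebraMap _ F g := by
    intro t
    have hd' : algebraMap _ F (C d : MvPolynomial (Fin n) K) ≠ 0 := by simpa using hd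
    induction t using Multiset.induction_on with
    | empty => intro _; exact ⟨1, by simp [hd']⟩
    | cons f t iht =>
      intro h
      obtain ⟨g, hg⟩ := iht fun g hg => h g (Multiset.mem_cons_of_mem hg)
      have hf' : algebraMap _ F f ≠ 0 := by simpa using h f (Multiset.mem_cons_self f t)
      refine ⟨f * g + C d * t.prod, ?_⟩
      rw [map_add, map_mul _ f g, ← hg]
      simp only [Multiset.map_cons, Multiset.sum_cons, Multiset.prod_cons, Subring.coe_add,
        coe_rc, map_mul]
      field_simp
      ring
  have hs0 : ∀ f ∈ s, f ≠ 0 := by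
    rintro f hf rfl
    simpa using hs 0 hf
  obtain ⟨g, hg⟩ := hclear s hs0
  have hu0 : (u : F) ≠ 0 := by
    obtain ⟨p, q, hp, hq, h, -⟩ := degDrop_const_add_sum (F := F) hn hd s hs
    intro h0
    rw [← hu, h0, zero_mul] at h
    exact hp (by simpa using h.symm)
  have hd' : algebraMap _ F (C d : MvPolynomial (Fin n) K) ≠ 0 := by simpa using hd
  have hdvd : u ∣ rc F s.prod := by
    refine ⟨rc F g * rc F (C d⁻¹), ?_⟩
    have hCi : algebraMap _ F (C d⁻¹ : MvPolynomial (Fin n) K)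
        = (algebraMap _ F (C d : MvPolynomial (Fin n) K))⁻¹ :=
      map_inv₀ ((algebraMap (MvPolynomial (Fin n) K) F).comp C) d
    have hsp : algebraMap _ F s.prod ≠ 0 := by
      have : s.prod ≠ 0 := Multiset.prod_ne_zero fun h => hs0 0 h rfl
      simpa using this
    ext
    simp only [Subring.coe_mul, coe_rc, ← hg, ← hu, hCi, map_mul]
    field_simp
  exact (hprod s hcop).isUnit_of_dvd' dvd_rfl hdvd

/-- The value is additive; in particular it is independent of the chosen fractions. -/
lemma DegDrop.unique {x y z : F} {k l m : ℕ} (hx : DegDrop (K := K) (n := n) x k)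
    (hy : DegDrop (K := K) (n := n) y l) (hz : DegDrop (K := K) (n := n) z m) (h : z = x * y) :
    m = k + l := by
  obtain ⟨p, q, hp, hq, e, hk⟩ := hx
  obtain ⟨p', q', hp', hq', e', hl⟩ := hy
  obtain ⟨p'', q'', hp'', hq'', e'', hm⟩ := hz
  have key : p'' * (q * q') = (p * p') * q'' := by
    apply IsFractionRing.injective (MvPolynomial (Fin n) K) F
    simp only [map_mul, ← e, ← e', ← e'', h]
    ring
  have := congrArg totalDegree key
  rw [totalDegree_mul_of_isDomain hp'' (mul_ne_zero hq hq'), totalDegree_mul_of_isDomain hq hq',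
    totalDegree_mul_of_isDomain (mul_ne_zero hp hp') hq'', totalDegree_mul_of_isDomain hp hp']
    at this
  omega

/-- Nonzero elements of `R` have nonnegative value, and those of value `0` are units. -/
lemma exists_degDrop (hn : 1 ≤ n) (a : ReciprocalComplement (MvPolynomial (Fin n) K) F)
    (ha : a ≠ 0) : ∃ k, DegDrop (K := K) (n := n) (a : F) k ∧ (k = 0 → IsUnit a) := by
  obtain ⟨d, s, hs, rfl⟩ := exists_rep a
  by_cases hd : d = 0
  · subst hd
    have h0 : rc F (C 0 : MvPolynomial (Fin n) K) = 0 := by ext; simp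
    rw [h0, zero_add] at ha ⊢
    obtain ⟨p, q, hlt, h⟩ := sum_deg (F := F) hn s hs
    have hq0 : q ≠ 0 := by rintro rfl; simp at hlt
    have hq' : algebraMap _ F q ≠ 0 := by simpa using hq0
    refine ⟨q.totalDegree - p.totalDegree, ⟨p, q, ?_, hq0, h, by omega⟩, by omega⟩
    rintro rfl
    rw [map_zero, mul_eq_zero] at h
    exact ha (Subtype.ext (h.resolve_right hq'))
  · exact ⟨0, degDrop_const_add_sum hn hd s hs, fun _ => isUnit_const_add_sum hn hd s hs⟩

lemma wfDvdMonoid (hn : 1 ≤ n) :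
    WfDvdMonoid (ReciprocalComplement (MvPolynomial (Fin n) K) F) := by
  classical
  choose v hv hunit using exists_degDrop (K := K) (F := F) hn
  -- The value of `0` is `⊤`, as `0` is strictly divisible by every nonzero element.
  let w : ReciprocalComplement (MvPolynomial (Fin n) K) F → ℕ∞ :=
    fun a => if h : a = 0 then ⊤ else v a h
  refine ⟨Subrelation.wf (r := InvImage (· < ·) w) ?_ (InvImage.wf w wellFounded_lt)⟩
  rintro a b ⟨ha, x, hx, rfl⟩
  change w a < w (a * x)
  by_cases hx0 : x = 0
  · simp [w, ha, hx0]
  · have hax : a * x ≠ 0 := mul_ne_zero ha hx0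
    have h1 := DegDrop.unique (hv a ha) (hv x hx0) (hv _ hax) (Subring.coe_mul _ _ _)
    have h2 : v x hx0 ≠ 0 := fun h => hx (hunit x hx0 h)
    simp only [w, dif_neg ha, dif_neg hax]
    exact_mod_cast (by omega : v a ha < v (a * x) hax)

end RecipAtomic

/-- The reciprocal complement of the polynomial ring `K[X₁, …, Xₙ]` (`n ≥ 1`) over a field
is atomic: every nonzero nonunit is a finite product of irreducible elements. -/
theorem recip_polynomialRing_atomic (K : Type*) [Field K] (n : ℕ) (hn : 1 ≤ n)
    (F : Type*) [Field F] [Algebra (MvPolynomial (Fin n) K) F]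
    [IsFractionRing (MvPolynomial (Fin n) K) F] :
    ∀ a : ReciprocalComplement (MvPolynomial (Fin n) K) F, a ≠ 0 → ¬ IsUnit a →
      ∃ s : Multiset (ReciprocalComplement (MvPolynomial (Fin n) K) F),
        (∀ b ∈ s, Irreducible b) ∧ s.prod = a := by
  intro a ha hu
  have := RecipAtomic.wfDvdMonoid (K := K) (F := F) hn
  obtain ⟨s, hs, hp, -⟩ := (WfDvdMonoid.not_isUnit_iff_exists_factors_eq a ha).1 hu
  exact ⟨s, hs, hp⟩
end

section
/- Let K be a field and n ≥ 2. Then the reciprocal complement R = R(K[X_1, ..., X_n]) is not a unique factorization domain. -/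
open MvPolynomial

namespace RecipPoly

/-! ### Residues at infinity of rational functions -/

section Residue

variable {σ K : Type*} [Field K] (m : MonomialOrder σ)

/-- The multidegree with values in a linearly ordered monoid, and with value `⊥` exactly at `0`. -/
noncomputable def deg (f : MvPolynomial σ K) : WithBot m.syn :=
  m.toWithBotSyn (m.withBotDegree f)

variable {m}

lemma deg_eq_bot {f : MvPolynomial σ K} : deg m f = ⊥ ↔ f = 0 := by
  simp [deg]

lemma deg_mul (f g : MvPolynomial σ K) : deg m (f * g) = deg m f + deg m g := by
  simp [deg, MonomialOrder.withBotDegree_mul]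

lemma deg_add_le (f g : MvPolynomial σ K) : deg m (f + g) ≤ max (deg m f) (deg m g) :=
  m.withBotDegree_add_le f g

lemma deg_neg (f : MvPolynomial σ K) : deg m (-f) = deg m f := by
  simp [deg]

lemma deg_C {c : K} (hc : c ≠ 0) : deg m (C c : MvPolynomial σ K) = 0 := by
  classical
  simp [deg, MonomialOrder.withBotDegree_C, hc]

lemma deg_one : deg m (1 : MvPolynomial σ K) = 0 := by
  simpa using deg_C (m := m) (one_ne_zero (α := K))

lemma deg_C_mul_le (c : K) (f : MvPolynomial σ K) : deg m (C c * f) ≤ deg m f := by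
  by_cases hc : c = 0
  · simp [hc, deg_eq_bot.2]
  · simp [deg_mul, deg_C hc]

lemma deg_mul_lt {f h g k : MvPolynomial σ K} (h1 : deg m f < deg m h) (h2 : deg m g ≤ deg m k)
    (hk : k ≠ 0) : deg m (f * g) < deg m (h * k) := by
  rw [deg_mul, deg_mul]
  calc deg m f + deg m g ≤ deg m f + deg m k := by gcongr
    _ < deg m h + deg m k := WithBot.add_lt_add_right (by simpa [deg_eq_bot] using hk) h1

variable {F : Type*} [Field F] [Algebra (MvPolynomial σ K) F]

variable (m) in
/-- `r = g / h` has residue `c` at infinity: `g - c h` has smaller degree than `h`. -/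
def ResidueEq (c : K) (r : F) : Prop :=
  ∃ g h : MvPolynomial σ K, h ≠ 0 ∧ r * algebraMap _ F h = algebraMap _ F g ∧
    deg m (g - C c * h) < deg m h

lemma deg_le_of_sub_lt {c : K} {g h : MvPolynomial σ K} (H : deg m (g - C c * h) < deg m h) :
    deg m g ≤ deg m h := by
  have := deg_add_le (m := m) (g - C c * h) (C c * h)
  rw [sub_add_cancel] at this
  exact this.trans (max_le H.le (deg_C_mul_le _ _))

lemma ResidueEq.add {c d : K} {r s : F} (hr : ResidueEq m c r) (hs : ResidueEq m d s) :
    ResidueEq m (c + d) (r + s) := by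
  obtain ⟨g, h, h0, e, H⟩ := hr
  obtain ⟨g', h', h0', e', H'⟩ := hs
  refine ⟨g * h' + g' * h, h * h', mul_ne_zero h0 h0', ?_, ?_⟩
  · simp only [map_add, map_mul, ← e, ← e']; ring
  · have : g * h' + g' * h - C (c + d) * (h * h') =
        (g - C c * h) * h' + (g' - C d * h') * h := by rw [C_add]; ring
    rw [this]
    refine (deg_add_le _ _).trans_lt (max_lt (deg_mul_lt H le_rfl h0') ?_)
    rw [mul_comm h h']
    exact deg_mul_lt H' le_rfl h0

lemma ResidueEq.neg {c : K} {r : F} (hr : ResidueEq m c r) : ResidueEq m (-c) (-r) := by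
  obtain ⟨g, h, h0, e, H⟩ := hr
  refine ⟨-g, h, h0, by rw [map_neg, ← e]; ring, ?_⟩
  have : -g - C (-c) * h = -(g - C c * h) := by rw [C_neg]; ring
  rwa [this, deg_neg]

lemma ResidueEq.mul {c d : K} {r s : F} (hr : ResidueEq m c r) (hs : ResidueEq m d s) :
    ResidueEq m (c * d) (r * s) := by
  obtain ⟨g, h, h0, e, H⟩ := hr
  obtain ⟨g', h', h0', e', H'⟩ := hs
  refine ⟨g * g', h * h', mul_ne_zero h0 h0', ?_, ?_⟩
  · simp only [map_mul, ← e, ← e']; ring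
  · have : g * g' - C (c * d) * (h * h') =
        (g - C c * h) * g' + (g' - C d * h') * (C c * h) := by rw [C_mul]; ring
    rw [this]
    refine (deg_add_le _ _).trans_lt (max_lt (deg_mul_lt H (deg_le_of_sub_lt H') h0') ?_)
    rw [mul_comm h h']
    exact deg_mul_lt H' (deg_C_mul_le _ _) h0

lemma residueEq_one : ResidueEq m (1 : K) (1 : F) :=
  ⟨1, 1, one_ne_zero, by simp, by
    simp [deg_one, deg_eq_bot.2]⟩

lemma ResidueEq.unique [IsFractionRing (MvPolynomial σ K) F] {c d : K} {r : F} (hr : ResidueEq m c r) (hs : ResidueEq m d r) :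
    c = d := by
  have h := hr.add hs.neg
  rw [add_neg_cancel] at h
  obtain ⟨g, h, h0, e, H⟩ := h
  have hg : g = 0 := by
    apply IsFractionRing.injective (MvPolynomial σ K) F
    rw [← e]; simp
  by_contra hcd
  have hne : c + -d ≠ 0 := by rwa [← sub_eq_add_neg, sub_ne_zero]
  rw [hg, zero_sub, deg_neg, deg_mul, deg_C hne, zero_add] at H
  exact lt_irrefl _ H

lemma ResidueEq.degree_eq {c : K} {r : F} (hc : c ≠ 0) (hr : ResidueEq m c r) :
    ∃ g h : MvPolynomial σ K, g ≠ 0 ∧ h ≠ 0 ∧ r * algebraMap _ F h = algebraMap _ F g ∧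
      m.degree g = m.degree h := by
  obtain ⟨g, h, h0, e, H⟩ := hr
  have h1 : deg m g = deg m h := by
    apply le_antisymm (deg_le_of_sub_lt H)
    by_contra! hlt
    have := deg_add_le (m := m) (-(g - C c * h)) g
    rw [deg_neg, show -(g - C c * h) + g = C c * h by ring, deg_mul, deg_C hc, zero_add] at this
    exact absurd this (not_le.2 (max_lt H hlt))
  refine ⟨g, h, ?_, h0, e, ?_⟩
  · rintro rfl
    rw [deg_eq_bot.2 rfl] at h1
    exact h0 (deg_eq_bot.1 h1.symm)
  · have := m.toWithBotSyn.injective h1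
    rw [MonomialOrder.degree_eq_unbotD_withBotDegree, this,
      ← MonomialOrder.degree_eq_unbotD_withBotDegree]

variable [IsFractionRing (MvPolynomial σ K) F]

/-- The residue of `1 / f` is `f⁻¹` if `f` is constant, and `0` otherwise. -/
lemma residueEq_inv {f : MvPolynomial σ K} (hf : f ≠ 0) :
    ∃ c : K, ResidueEq m c (algebraMap _ F f)⁻¹ := by
  have hf' : algebraMap _ F f ≠ 0 := by
    simpa using hf
  by_cases hd : m.degree f = 0
  · have hC := MonomialOrder.eq_C_of_degree_eq_zero hd
    set c := m.leadingCoeff f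
    have hc : c ≠ 0 := by rintro h; rw [h] at hC; simp [hC] at hf
    refine ⟨c⁻¹, 1, f, hf, by simp [hf'], ?_⟩
    rw [hC, ← C_mul, inv_mul_cancel₀ hc, C_1, sub_self, deg_eq_bot.2 rfl, deg_C hc]
    exact WithBot.bot_lt_coe _
  · refine ⟨0, 1, f, hf, by simp [hf'], ?_⟩
    rw [C_0, zero_mul, sub_zero, deg_one, deg, (m.withBotDegree_eq_coe_degree_iff f).2 hf,
      MonomialOrder.toWithBotSyn_apply_coe, ← WithBot.coe_zero, WithBot.coe_lt_coe]
    rw [MonomialOrder.toSyn_lt_iff_ne_zero]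
    simpa using hd

/-- If the residue of `1 / Xᵢ` were nonzero, then `1 / Xᵢ` would be a fraction `g / (g Xᵢ)` with
numerator and denominator of the same degree. -/
lemma residueEq_inv_X (i : σ) :
    ResidueEq m (0 : K) (algebraMap (MvPolynomial σ K) F (X i))⁻¹ := by
  have hx : (X i : MvPolynomial σ K) ≠ 0 := X_ne_zero i
  obtain ⟨c, hc⟩ := residueEq_inv (m := m) (F := F) hx
  by_cases h0 : c = 0
  · rwa [h0] at hc
  obtain ⟨g, h, hg, hh, e, hd⟩ := hc.degree_eq h0
  have hX : algebraMap (MvPolynomial σ K) F (X i) ≠ 0 := by simp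
  have : h = g * X i := by
    apply IsFractionRing.injective (MvPolynomial σ K) F
    rw [map_mul, ← e]; field_simp
  rw [this, m.degree_mul hg hx, MonomialOrder.degree_X] at hd
  simp at hd

end Residue

/-! ### The reciprocal complement and its residue ideal -/

section Ring

variable {n : ℕ} {K F : Type*} [Field K] [Field F] [Algebra (MvPolynomial (Fin n) K) F]

local notation "D" => MvPolynomial (Fin n) K
local notation "R" => ReciprocalComplement (MvPolynomial (Fin n) K) F

lemma inv_mem {f : D} (hf : f ≠ 0) : (algebraMap D F f)⁻¹ ∈ R :=
  Subring.subset_closure ⟨f, hf, rfl⟩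

variable (K F) in
/-- The reciprocal of the product of the variables. -/
noncomputable def recipProd (n : ℕ) [Algebra (MvPolynomial (Fin n) K) F] :
    ReciprocalComplement (MvPolynomial (Fin n) K) F :=
  ⟨(algebraMap (MvPolynomial (Fin n) K) F (∏ i, X i))⁻¹,
    inv_mem (Finset.prod_ne_zero_iff.2 fun i _ => X_ne_zero i)⟩

variable [IsFractionRing (MvPolynomial (Fin n) K) F]

lemma algebraMap_mul_recipProd_mem (i : Fin n) :
    algebraMap D F (X i) * (recipProd K F n : F) ∈ R := by
  have hX : algebraMap D F (X i) ≠ 0 := by simp [X_ne_zero]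
  have : algebraMap D F (X i) * (recipProd K F n : F) =
      (algebraMap D F (∏ j ∈ Finset.univ.erase i, X j))⁻¹ := by
    simp only [recipProd]
    rw [← Finset.mul_prod_erase _ _ (Finset.mem_univ i), map_mul, mul_inv,
      mul_inv_cancel_left₀ hX]
  rw [this]
  exact inv_mem (Finset.prod_ne_zero_iff.2 fun i _ => X_ne_zero i)

lemma exists_mul_pow_mem (f : D) :
    ∃ k : ℕ, algebraMap D F f * (recipProd K F n : F) ^ k ∈ R := by
  have ha := (recipProd K F n).2
  induction f using MvPolynomial.induction_on with
  | C c =>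
    refine ⟨0, ?_⟩
    by_cases hc : c = 0
    · simp [hc]
    · have : algebraMap D F (C c) * (recipProd K F n : F) ^ 0 = (algebraMap D F (C c⁻¹))⁻¹ := by
        rw [pow_zero, mul_one]
        apply eq_inv_of_mul_eq_one_left
        rw [← map_mul, ← C_mul, mul_inv_cancel₀ hc, C_1, map_one]
      rw [this]
      exact inv_mem (by simpa using hc)
  | add f g hf hg =>
    obtain ⟨k, hk⟩ := hf
    obtain ⟨l, hl⟩ := hg
    refine ⟨k + l, ?_⟩
    have := add_mem (mul_mem hk (pow_mem ha l)) (mul_mem hl (pow_mem ha k))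
    convert this using 1
    rw [map_add]; ring
  | mul_X f i hf =>
    obtain ⟨k, hk⟩ := hf
    refine ⟨k + 1, ?_⟩
    convert mul_mem hk (algebraMap_mul_recipProd_mem (F := F) (K := K) i) using 1
    rw [map_mul]; ring

/-- The fraction field is obtained from `R` by inverting `recipProd`. -/
lemma exists_dvd_pow (r : R) (hr : r ≠ 0) : ∃ k : ℕ, r ∣ recipProd K F n ^ k := by
  obtain ⟨g, h, hh, e⟩ := IsFractionRing.div_surjective (A := D) (r : F)
  have hr' : (r : F) ≠ 0 := by simpa using hr
  have hg : g ≠ 0 := by rintro rfl; apply hr'; rw [← e]; simp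
  obtain ⟨k, hk⟩ := exists_mul_pow_mem (F := F) h
  refine ⟨k, ⟨(algebraMap D F g)⁻¹ * (algebraMap D F h * (recipProd K F n : F) ^ k),
    mul_mem (inv_mem hg) hk⟩, ?_⟩
  apply Subtype.ext
  have h1 : algebraMap D F g ≠ 0 := by simpa using hg
  have h2 : algebraMap D F h ≠ 0 := by simpa using nonZeroDivisors.ne_zero hh
  simp only [Subring.coe_pow, Subring.coe_mul, ← e]
  field_simp

variable (m : MonomialOrder (Fin n))

lemma exists_residueEq (r : R) : ∃ c : K, ResidueEq m c (r : F) := by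
  obtain ⟨r, hr⟩ := r
  change ∃ c : K, ResidueEq m c r
  induction hr using Subring.closure_induction with
  | mem x hx => obtain ⟨f, hf, rfl⟩ := hx; exact residueEq_inv hf
  | zero => exact ⟨0, by
      simpa using (residueEq_one (m := m) (K := K) (F := F)).add residueEq_one.neg⟩
  | one => exact ⟨1, residueEq_one⟩
  | add x y _ _ hx hy => exact ⟨_, hx.choose_spec.add hy.choose_spec⟩
  | neg x _ hx => exact ⟨_, hx.choose_spec.neg⟩
  | mul x y _ _ hx hy => exact ⟨_, hx.choose_spec.mul hy.choose_spec⟩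

variable (K F) in
/-- The elements of `R` of residue `0`. -/
def residueIdeal : Ideal R where
  carrier := {r | ResidueEq m (0 : K) (r : F)}
  add_mem' ha hb := by simpa using ResidueEq.add ha hb
  zero_mem' := by
    simpa using (residueEq_one (m := m) (K := K) (F := F)).add residueEq_one.neg
  smul_mem' a b hb := by
    obtain ⟨c, hc⟩ := exists_residueEq m a
    simpa using hc.mul hb

instance : (residueIdeal K F m).IsPrime := by
  refine Ideal.isPrime_iff.2 ⟨fun h => ?_, fun {x y} hxy => ?_⟩
  · have h1 : (1 : R) ∈ residueIdeal K F m := h ▸ Submodule.mem_top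
    exact one_ne_zero ((residueEq_one (m := m) (K := K) (F := F)).unique h1)
  · obtain ⟨c, hc⟩ := exists_residueEq m x
    obtain ⟨d, hd⟩ := exists_residueEq m y
    have hxy' : ResidueEq m (0 : K) ((x : F) * (y : F)) := hxy
    rcases mul_eq_zero.1 ((hc.mul hd).unique hxy') with rfl | rfl
    · exact Or.inl hc
    · exact Or.inr hd

end Ring

/-! ### Factorial domains whose fraction field is obtained by inverting one element -/

section UFD

variable {A : Type*} [CommRing A] [UniqueFactorizationMonoid A] (P : Ideal A)
  [P.IsPrime]

lemma exists_prime_factor_mem {r : A} (hr : r ∈ P) (h0 : r ≠ 0) :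
    ∃ p, Prime p ∧ p ∈ P ∧ p ∣ r := by
  obtain ⟨s, hs, u, hu⟩ := UniqueFactorizationMonoid.exists_prime_factors r h0
  have : s.prod ∈ P := by
    refine (Ideal.IsPrime.mem_or_mem ‹_› (hu ▸ hr)).resolve_right fun h => ?_
    exact Ideal.IsPrime.ne_top ‹_› (Ideal.eq_top_of_isUnit_mem _ h u.isUnit)
  obtain ⟨p, hp, hpP⟩ := (Ideal.IsPrime.multiset_prod_mem_iff_exists_mem ‹_› s).1 this
  exact ⟨p, hs p hp, hpP, (Multiset.dvd_prod hp).trans (hu ▸ Dvd.intro _ rfl)⟩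

/-- If the fraction field of a factorial domain is obtained by inverting one element `a`, then a
nonzero prime ideal is contained in a principal ideal generated by one of its prime elements. -/
lemma exists_prime_dvd [IsDomain A] {a : A} (ha : a ≠ 0) (hdiv : ∀ r : A, r ≠ 0 → ∃ k : ℕ, r ∣ a ^ k)
    {r : A} (hr : r ∈ P) (h0 : r ≠ 0) :
    ∃ p ∈ P, Prime p ∧ ∀ s ∈ P, p ∣ s := by
  obtain ⟨p, hp, hpP, -⟩ := exists_prime_factor_mem P hr h0
  have hprime : ∀ q : A, Prime q → q ∣ a := fun q hq => by
    obtain ⟨k, hk⟩ := hdiv q hq.ne_zero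
    exact hq.dvd_of_dvd_pow hk
  obtain ⟨t, hat, hpt⟩ :=
    (FiniteMultiplicity.of_prime_left hp ha).exists_eq_pow_mul_and_not_dvd
  set e := multiplicity p a
  have hdvd : ∀ q : A, Prime q → q ∣ p ∨ q ∣ t := fun q hq => by
    have := hprime q hq
    rw [hat] at this
    exact (hq.dvd_or_dvd this).imp_left hq.dvd_of_dvd_pow
  have ht : t ∉ P := by
    intro ht
    have hne : p + t ≠ 0 := fun h => hpt ⟨-1, by linear_combination h⟩
    obtain ⟨q, hq, -, hqd⟩ := exists_prime_factor_mem P (P.add_mem hpP ht) hne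
    have hqp : q ∣ p := by
      rcases hdvd q hq with h | h
      · exact h
      · exact (dvd_add_left h).1 hqd
    have hqt : q ∣ t := (dvd_add_right hqp).1 hqd
    exact hpt (((hq.associated_of_dvd hp hqp).symm.dvd).trans hqt)
  refine ⟨p, hpP, hp, fun s hs => ?_⟩
  by_cases hs0 : s = 0
  · simp [hs0]
  obtain ⟨q, hq, hqP, hqs⟩ := exists_prime_factor_mem P hs hs0
  rcases hdvd q hq with h | h
  · exact ((hq.associated_of_dvd hp h).symm.dvd).trans hqs
  · exact absurd (P.mem_of_dvd h hqP) ht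

end UFD

end RecipPoly

open RecipPoly in
/-- For `n ≥ 2`, the reciprocal complement of the polynomial ring `K[X₁, …, Xₙ]` over a
field is not a unique factorization domain. -/
theorem recip_polynomialRing_not_UFD (K : Type*) [Field K] (n : ℕ) (hn : 2 ≤ n)
    (F : Type*) [Field F] [Algebra (MvPolynomial (Fin n) K) F]
    [IsFractionRing (MvPolynomial (Fin n) K) F] :
    ¬ UniqueFactorizationMonoid (ReciprocalComplement (MvPolynomial (Fin n) K) F) := by
  intro hU
  let m : MonomialOrder (Fin n) := MonomialOrder.lex
  have hX (i : Fin n) : algebraMap (MvPolynomial (Fin n) K) F (X i) ≠ 0 := by simp [X_ne_zero]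
  let x (i : Fin n) : ReciprocalComplement (MvPolynomial (Fin n) K) F :=
    ⟨(algebraMap (MvPolynomial (Fin n) K) F (X i))⁻¹, inv_mem (X_ne_zero i)⟩
  have hx0 (i : Fin n) : x i ≠ 0 := fun h => inv_ne_zero (hX i) (congrArg Subtype.val h)
  have hxm (i : Fin n) : x i ∈ residueIdeal K F m := residueEq_inv_X i
  have ha : recipProd K F n ≠ 0 := fun h => by
    have := congrArg Subtype.val h
    simp [recipProd, Finset.prod_eq_zero_iff] at this
  let i : Fin n := ⟨0, by omega⟩
  let j : Fin n := ⟨1, by omega⟩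
  have hij : i ≠ j := by simp [i, j]
  obtain ⟨p, -, hp, hdvd⟩ :=
    exists_prime_dvd (residueIdeal K F m) ha exists_dvd_pow (hxm i) (hx0 i)
  have key (i : Fin n) : ∃ (k : ℕ) (s : ReciprocalComplement (MvPolynomial (Fin n) K) F),
      x i = p ^ k * s ∧ s ∉ residueIdeal K F m := by
    obtain ⟨s, h, hs⟩ :=
      (FiniteMultiplicity.of_prime_left hp (hx0 i)).exists_eq_pow_mul_and_not_dvd
    exact ⟨_, s, h, fun h => hs (hdvd s h)⟩
  -- Nonzero residue means that numerator and denominator have the same degree.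
  have hdeg : ∀ s : ReciprocalComplement (MvPolynomial (Fin n) K) F, s ∉ residueIdeal K F m →
      ∃ g h : MvPolynomial (Fin n) K, g ≠ 0 ∧ h ≠ 0 ∧
        (s : F) * algebraMap _ F h = algebraMap _ F g ∧ m.degree g = m.degree h := by
    intro s hs
    obtain ⟨c, hc⟩ := exists_residueEq m s
    refine hc.degree_eq ?_
    rintro rfl
    exact hs hc
  obtain ⟨k, s, hk, hs⟩ := key i
  obtain ⟨l, t, hl, ht⟩ := key j
  have hl0 : l ≠ 0 := by
    rintro rfl
    rw [pow_zero, one_mul] at hl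
    exact ht (hl ▸ hxm j)
  have hrel : x i ^ l * t ^ k = x j ^ k * s ^ l := by
    rw [hk, hl]; ring
  obtain ⟨g, h, hg, hh, e, hd⟩ := hdeg (t ^ k) fun h =>
    ht (Ideal.IsPrime.mem_of_pow_mem inferInstance k h)
  obtain ⟨g', h', hg', hh', e', hd'⟩ :=
    hdeg (s ^ l) fun h =>
    hs (Ideal.IsPrime.mem_of_pow_mem inferInstance l h)
  have hpoly : X j ^ k * (g * h') = X i ^ l * (g' * h) := by
    apply IsFractionRing.injective (MvPolynomial (Fin n) K) F
    have hrel' := congrArg Subtype.val hrel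
    simp only [Subring.coe_mul, Subring.coe_pow, x, inv_pow] at hrel' e e'
    simp only [map_mul, map_pow, ← e, ← e']
    have hXi := hX i
    have hXj := hX j
    field_simp at hrel'
    linear_combination (algebraMap _ F h * algebraMap _ F h') * hrel'
  have hdd := congrArg m.degree hpoly
  rw [m.degree_mul (pow_ne_zero _ (X_ne_zero _)) (mul_ne_zero hg hh'),
    m.degree_mul (pow_ne_zero _ (X_ne_zero _)) (mul_ne_zero hg' hh), m.degree_mul hg hh',
    m.degree_mul hg' hh, hd, hd', add_comm (m.degree h), add_left_inj, m.degree_pow, m.degree_pow,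
    MonomialOrder.degree_X, MonomialOrder.degree_X] at hdd
  have := DFunLike.congr_fun hdd i
  simp [hij] at this
  exact hl0 this.symm
end

section
/- Let K be a field, n ≥ 1, and 1 ≤ i ≤ n. Inside F = K(X_1, ..., X_n), let R = R(K[X_1, ..., X_n]) and let S = R(K(X_i)[X_1, ..., X_{i-1}, X_{i+1}, ..., X_n]) be the reciprocal complement of the polynomial ring in the remaining n−1 variables over the field K(X_i) (both viewed as subrings of F). Then R[X_i] = S, where R[X_i] is the subring of F generated by R and X_i. -/
/-- Polynomials in `Xᵢ` alone lie in `R[Xᵢ]`, where `R` is the reciprocal complement of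
`K[X₁, …, Xₙ]`. -/
theorem recip_adjoin_supported_mem (K : Type*) [Field K] {n : ℕ} (i : Fin n)
    (F : Type*) [Field F] [Algebra (MvPolynomial (Fin n) K) F]
    {g : MvPolynomial (Fin n) K}
    (hg : g ∈ MvPolynomial.supported K ({i} : Set (Fin n))) :
    algebraMap (MvPolynomial (Fin n) K) F g ∈ Subring.closure
        ((ReciprocalComplement (MvPolynomial (Fin n) K) F : Set F) ∪
          {algebraMap (MvPolynomial (Fin n) K) F (MvPolynomial.X i)}) := by
  unfold MvPolynomial.supported at hg
  induction hg using Algebra.adjoin_induction with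
  | mem x hx =>
    obtain ⟨j, rfl, rfl⟩ := hx
    exact Subring.subset_closure (Or.inr rfl)
  | algebraMap c =>
    by_cases hc : c = 0
    · simp [hc]
    refine Subring.subset_closure (Or.inl (Subring.subset_closure
      ⟨MvPolynomial.C c⁻¹, by simpa using hc, ?_⟩))
    apply eq_inv_of_mul_eq_one_left
    rw [MvPolynomial.algebraMap_eq, ← map_mul, ← map_mul, mul_inv_cancel₀ hc, map_one, map_one]
  | add x y _ _ hx hy => rw [map_add]; exact add_mem hx hy
  | mul x y _ _ hx hy => rw [map_mul]; exact mul_mem hx hy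

/-- Inside `F = K(X₁, …, Xₙ)`, the subring `R[Xᵢ]` generated by the reciprocal complement
`R` of `K[X₁, …, Xₙ]` together with `Xᵢ` equals the reciprocal complement of
`K(Xᵢ)[X₁, …, X̂ᵢ, …, Xₙ]`, the latter viewed inside `F` as the set of fractions `f/g`
with `f ∈ K[X₁, …, Xₙ]` and `g` a nonzero polynomial in `Xᵢ` alone. -/
theorem recip_adjoin_Xi (K : Type*) [Field K] (n : ℕ) (hn : 1 ≤ n) (i : Fin n)
    (F : Type*) [Field F] [Algebra (MvPolynomial (Fin n) K) F]
    [IsFractionRing (MvPolynomial (Fin n) K) F] :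
    Subring.closure
        ((ReciprocalComplement (MvPolynomial (Fin n) K) F : Set F) ∪
          {algebraMap (MvPolynomial (Fin n) K) F (MvPolynomial.X i)})
      = ReciprocalComplementSet
          {x : F | ∃ f g : MvPolynomial (Fin n) K,
            g ∈ MvPolynomial.supported K ({i} : Set (Fin n)) ∧ g ≠ 0 ∧
            x = algebraMap (MvPolynomial (Fin n) K) F f /
                  algebraMap (MvPolynomial (Fin n) K) F g} := by
  have hinj : Function.Injective (algebraMap (MvPolynomial (Fin n) K) F) :=
    IsFractionRing.injective _ _
  apply le_antisymm
  · rw [Subring.closure_le]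
    apply Set.union_subset
    · refine Subring.closure_le.2 ?_
      rintro x ⟨f, hf, rfl⟩
      exact Subring.subset_closure ⟨algebraMap _ F f, ⟨f, 1, one_mem _, one_ne_zero, by simp⟩,
        (map_ne_zero_iff _ hinj).2 hf, rfl⟩
    · rw [Set.singleton_subset_iff]
      have hX : (MvPolynomial.X i : MvPolynomial (Fin n) K) ≠ 0 := MvPolynomial.X_ne_zero i
      refine Subring.subset_closure ⟨(algebraMap _ F (MvPolynomial.X i))⁻¹,
        ⟨1, MvPolynomial.X i, MvPolynomial.X_mem_supported.2 rfl, hX, by simp⟩,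
        inv_ne_zero ((map_ne_zero_iff _ hinj).2 hX), (inv_inv _).symm⟩
  · refine Subring.closure_le.2 ?_
    rintro x ⟨y, ⟨f, g, hg, hg0, rfl⟩, hy, rfl⟩
    have hf : f ≠ 0 := by
      rintro rfl
      simp at hy
    rw [inv_div, div_eq_mul_inv]
    refine mul_mem (recip_adjoin_supported_mem K i F hg) ?_
    exact Subring.subset_closure (Or.inl (Subring.subset_closure ⟨f, hf, rfl⟩))
end

section
/- Let K be a field and n ≥ 0. Then the Krull dimension of the reciprocal complement R = R(K[X_1, ..., X_n]) equals n. -/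
open Polynomial in
/-- Evaluation at `X = ∞` as a ring homomorphism `R(D[X]) → L = Frac D`: it sends `1/f` to `0` when
`f` has positive degree and to `1/a` when `f = a` is constant. The ring `T` stands for any
isomorphic copy of `D[X]`. -/
lemma recip_exists_residueHom {D L T F : Type*} [CommRing D] [IsDomain D] [Field L] [Algebra D L]
    [IsFractionRing D L] [CommRing T] [IsDomain T] (e : T ≃+* D[X]) [Field F] [Algebra T F]
    [IsFractionRing T F] :
    ∃ φ : ReciprocalComplement T F →+* L, ∀ (f : T) (_ : f ≠ 0)
      (x : ReciprocalComplement T F), (x : F) = (algebraMap T F f)⁻¹ →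
        φ x = if (e f).natDegree = 0 then (algebraMap D L ((e f).coeff 0))⁻¹ else 0 := by
  have hDL : Function.Injective (algebraMap D L) := IsFractionRing.injective D L
  -- `t` is the image of `X` and `s = t⁻¹` is the variable of the Laurent series field
  let i : D →+* LaurentSeries L := HahnSeries.C.comp (algebraMap D L)
  let t : LaurentSeries L := HahnSeries.single (-1) 1
  let s : LaurentSeries L := HahnSeries.single 1 1
  have hts : t * s = 1 := by simp [t, s]
  have hst : s * t = 1 := by simp [t, s]
  let : Invertible t := ⟨s, hst, hts⟩
  let ps : D[X] →+* PowerSeries L :=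
    (Polynomial.coeToPowerSeries.ringHom).comp (Polynomial.mapRingHom (algebraMap D L))
  have hps : ∀ p : D[X], p.eval₂ i s = HahnSeries.ofPowerSeries ℤ L (ps p) := by
    intro p
    have : eval₂RingHom i s = (HahnSeries.ofPowerSeries ℤ L).comp ps := by
      ext a
      · simp [i, ps]
      · simp [ps, s]
    exact congrArg (fun h : D[X] →+* LaurentSeries L ↦ h p) this
  have hconst : ∀ p : D[X], p ≠ 0 →
      PowerSeries.constantCoeff (ps p.reverse) = algebraMap D L p.leadingCoeff := by
    intro p _
    simp [ps, ← PowerSeries.coeff_zero_eq_constantCoeff]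
  -- the inverse of `p(1/s)` is the power series `s ^ deg p * (reverse p)⁻¹`
  let w : D[X] → PowerSeries L := fun p ↦ PowerSeries.X ^ p.natDegree * (ps p.reverse)⁻¹
  have hw : ∀ p : D[X], p ≠ 0 → p.eval₂ i t * HahnSeries.ofPowerSeries ℤ L (w p) = 1 := by
    intro p hp
    have h1 := eval₂_reverse_mul_pow i t p
    rw [show ⅟t = s from rfl, hps] at h1
    have h2 : ps p.reverse * (ps p.reverse)⁻¹ = 1 := by
      apply PowerSeries.mul_inv_cancel
      rw [hconst p hp]
      simpa [map_eq_zero_iff _ hDL] using hp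
    have h3 : HahnSeries.ofPowerSeries ℤ L (PowerSeries.X ^ p.natDegree) = s ^ p.natDegree := by
      simp [s]
    calc _ = HahnSeries.ofPowerSeries ℤ L (ps p.reverse * (ps p.reverse)⁻¹)
          * (t * s) ^ p.natDegree := by
          rw [← h1, map_mul, map_mul, h3, mul_pow]; ring
      _ = 1 := by rw [h2, hts]; simp
  let g : T →+* LaurentSeries L := (eval₂RingHom i t).comp e.toRingHom
  have hg : Function.Injective g := by
    rw [injective_iff_map_eq_zero]
    intro f hf
    by_contra hne
    have h := hw (e f) (by simpa using hne)
    rw [show (e f).eval₂ i t = 0 from hf, zero_mul] at h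
    exact zero_ne_one h
  let ι : F →+* LaurentSeries L := IsFractionRing.lift hg
  have hι : ∀ f : T, f ≠ 0 →
      ι (algebraMap T F f)⁻¹ = HahnSeries.ofPowerSeries ℤ L (w (e f)) := by
    intro f hf
    rw [map_inv₀, show ι (algebraMap T F f) = g f from IsFractionRing.lift_algebraMap hg f]
    exact inv_eq_of_mul_eq_one_right (hw (e f) (by simpa using hf))
  have hinj : Function.Injective (HahnSeries.ofPowerSeries ℤ L) :=
    HahnSeries.ofPowerSeries_injective
  have hle : ReciprocalComplement T F ≤ (HahnSeries.ofPowerSeries ℤ L).range.comap ι := by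
    refine Subring.closure_le.mpr ?_
    rintro _ ⟨f, hf, rfl⟩
    exact ⟨_, (hι f hf).symm⟩
  let ρ : ReciprocalComplement T F →+* (HahnSeries.ofPowerSeries ℤ L).range :=
    (ι.comp (Subring.subtype _)).codRestrict _ fun x ↦ hle x.2
  let eqv := RingEquiv.ofLeftInverse (Function.leftInverse_invFun hinj)
  refine ⟨PowerSeries.constantCoeff.comp ((eqv.symm : _ →+* PowerSeries L).comp ρ), ?_⟩
  intro f hf x hx
  have h1 : eqv.symm (ρ x) = w (e f) := by
    rw [RingEquiv.symm_apply_eq]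
    apply Subtype.ext
    change ι x = HahnSeries.ofPowerSeries ℤ L (w (e f))
    rw [hx, hι f hf]
  have hef : e f ≠ 0 := by simpa using hf
  change PowerSeries.constantCoeff (eqv.symm (ρ x)) = _
  rw [h1]
  have h2 := hconst (e f) hef
  split_ifs with h0
  · simp only [w, h0, pow_zero, one_mul, PowerSeries.constantCoeff_inv, h2]
    rw [leadingCoeff, h0]
  · simp [w, h0]

open Polynomial in
/-- Adjoining a variable raises the dimension of the reciprocal complement by at least one: the
homomorphism `R(D[X]) → R(D)` given by evaluation at `X = ∞` is onto and kills `1/X ≠ 0`. -/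
lemma recip_ringKrullDim_succ_le {D L T F : Type*} [CommRing D] [IsDomain D] [Field L]
    [Algebra D L] [IsFractionRing D L] [CommRing T] [IsDomain T] (e : T ≃+* D[X]) [Field F]
    [Algebra T F] [IsFractionRing T F] :
    ringKrullDim (ReciprocalComplement D L) + 1 ≤ ringKrullDim (ReciprocalComplement T F) := by
  obtain ⟨φ, hφ⟩ := recip_exists_residueHom (L := L) (F := F) e
  have hmem : ∀ f : T, f ≠ 0 → (algebraMap T F f)⁻¹ ∈ ReciprocalComplement T F :=
    fun f hf ↦ Subring.subset_closure ⟨f, hf, rfl⟩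
  have hrange : ReciprocalComplement D L = φ.range := by
    apply le_antisymm
    · refine Subring.closure_le.mpr ?_
      rintro _ ⟨a, ha, rfl⟩
      have hf : e.symm (C a) ≠ 0 := by simpa using ha
      exact ⟨⟨_, hmem _ hf⟩, by rw [hφ _ hf _ rfl]; simp⟩
    · rintro _ ⟨⟨x, hx⟩, rfl⟩
      induction hx using Subring.closure_induction with
      | mem x hx =>
        obtain ⟨f, hf, hxf⟩ := hx
        rw [hφ f hf _ hxf]
        split_ifs with h0
        · refine Subring.subset_closure ⟨(e f).coeff 0, fun hc ↦ hf ?_, rfl⟩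
          have h1 := eq_C_of_natDegree_eq_zero h0
          rw [hc, C_0] at h1
          simpa using h1
        · exact Subring.zero_mem _
      | zero => exact (map_zero φ).symm ▸ Subring.zero_mem _
      | one => exact (map_one φ).symm ▸ Subring.one_mem _
      | add x y hx hy ihx ihy =>
        exact (map_add φ ⟨x, hx⟩ ⟨y, hy⟩).symm ▸ Subring.add_mem _ ihx ihy
      | neg x hx ihx => exact (map_neg φ ⟨x, hx⟩).symm ▸ Subring.neg_mem _ ihx
      | mul x y hx hy ihx ihy =>
        exact (map_mul φ ⟨x, hx⟩ ⟨y, hy⟩).symm ▸ Subring.mul_mem _ ihx ihy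
  have hX : e.symm X ≠ 0 := by simp
  rw [hrange]
  refine ringKrullDim_succ_le_of_surjective φ.rangeRestrict φ.rangeRestrict_surjective
    (r := ⟨_, hmem _ hX⟩) (mem_nonZeroDivisors_of_ne_zero fun h ↦ ?_) ?_
  · have := congrArg Subtype.val h
    simp at this
  · apply Subtype.ext
    change φ _ = 0
    rw [hφ _ hX _ rfl]
    simp

/-- Distinct comparable primes of an integral extension have distinct contractions. -/
lemma ringKrullDim_le_of_isIntegral {A B : Type*} [CommRing A] [CommRing B] [Algebra A B]
    [Algebra.IsIntegral A B] : ringKrullDim B ≤ ringKrullDim A :=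
  Order.krullDim_le_of_strictMono (fun p ↦ PrimeSpectrum.comap (algebraMap A B) p)
    fun _ _ h ↦ Ideal.IsIntegral.comap_lt_comap h

lemma ringKrullDim_le_of_finiteType {K A : Type*} [Field K] [CommRing A] [IsDomain A]
    [Algebra K A] [Algebra.FiniteType K A] {n : ℕ} (h : Algebra.trdeg K A ≤ n) :
    ringKrullDim A ≤ n := by
  obtain ⟨s, g, hg, hint⟩ := exists_integral_inj_algHom_of_fg K A
  algebraize [g.toRingHom]
  have : Algebra.IsIntegral (MvPolynomial (Fin s) K) A := ⟨hint⟩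
  refine ringKrullDim_le_of_isIntegral (A := MvPolynomial (Fin s) K) |>.trans ?_
  rw [MvPolynomial.ringKrullDim_of_isNoetherianRing, ringKrullDim_eq_zero_of_field]
  have h1 := lift_trdeg_le_of_injective g hg
  simp at h1
  have h2 : s ≤ n := by exact_mod_cast h1.trans h
  simpa using h2

/-- A domain over a field has Krull dimension at most its transcendence degree, without any
finiteness assumption on the algebra. -/
lemma ringKrullDim_le_of_trdeg_le {K A : Type*} [Field K] [CommRing A] [IsDomain A]
    [Algebra K A] {n : ℕ} (h : Algebra.trdeg K A ≤ n) : ringKrullDim A ≤ n := by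
  refine iSup_le fun p ↦ ?_
  have hex : ∀ i : Fin p.length,
      ∃ a, a ∈ (p i.succ).asIdeal ∧ a ∉ (p i.castSucc).asIdeal := fun i ↦
    SetLike.exists_of_lt (p.step i)
  choose a ha hna using hex
  -- `B` contains witnesses of every strict inclusion in the chain
  let B := Algebra.adjoin K (Set.range a)
  have hB : Algebra.FiniteType K B :=
    B.fg_iff_finiteType.mp (Subalgebra.fg_def.mpr ⟨_, Set.finite_range a, rfl⟩)
  have haB : ∀ i, a i ∈ B := fun i ↦ Algebra.subset_adjoin ⟨i, rfl⟩
  let q : LTSeries (PrimeSpectrum B) :=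
    { length := p.length
      toFun := fun i ↦ PrimeSpectrum.comap (algebraMap B A) (p i)
      step := fun i ↦ by
        refine lt_of_le_not_ge (Ideal.comap_mono (p.step i).le) fun hle ↦ ?_
        exact hna i (hle (show (⟨a i, haB i⟩ : B) ∈ _ from ha i)) }
  have hq : (p.length : WithBot ℕ∞) ≤ ringKrullDim B := Order.LTSeries.length_le_krullDim q
  exact hq.trans (ringKrullDim_le_of_finiteType
    ((trdeg_le_of_injective B.val Subtype.val_injective).trans h))

lemma recip_polynomialRing_krullDim_le (K : Type*) [Field K] (n : ℕ)
    (F : Type*) [Field F] [Algebra (MvPolynomial (Fin n) K) F]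
    [IsFractionRing (MvPolynomial (Fin n) K) F] :
    ringKrullDim (ReciprocalComplement (MvPolynomial (Fin n) K) F) ≤ n := by
  let κ : K →+* F := (algebraMap (MvPolynomial (Fin n) K) F).comp MvPolynomial.C
  let : Algebra K F := κ.toAlgebra
  have : IsScalarTower K (MvPolynomial (Fin n) K) F := IsScalarTower.of_algebraMap_eq fun _ ↦ rfl
  -- `c = 1 / c⁻¹` shows that the constants lie in the reciprocal complement
  have hmem : ∀ c : K, κ c ∈ ReciprocalComplement (MvPolynomial (Fin n) K) F := by
    intro c
    rcases eq_or_ne c 0 with rfl | hc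
    · simp
    · refine Subring.subset_closure ⟨MvPolynomial.C c⁻¹, by simpa using hc, ?_⟩
      change κ c = (κ c⁻¹)⁻¹
      rw [map_inv₀, inv_inv]
  let : Algebra K (ReciprocalComplement (MvPolynomial (Fin n) K) F) :=
    (κ.codRestrict _ hmem).toAlgebra
  let ψ : ReciprocalComplement (MvPolynomial (Fin n) K) F →ₐ[K] F :=
    { Subring.subtype _ with commutes' := fun _ ↦ rfl }
  apply ringKrullDim_le_of_trdeg_le (K := K)
  refine (trdeg_le_of_injective ψ Subtype.val_injective).trans ?_
  have : Algebra.IsAlgebraic (MvPolynomial (Fin n) K) F :=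
    IsLocalization.isAlgebraic _ (nonZeroDivisors (MvPolynomial (Fin n) K))
  -- the variables form a transcendence basis of `F` over `K`
  have hb := (IsTranscendenceBasis.mvPolynomial (Fin n) K).algebraMap_comp (A := F)
  have := hb.lift_cardinalMk_eq_trdeg
  simp at this
  exact this.ge

lemma le_recip_polynomialRing_krullDim (K : Type*) [Field K] (n : ℕ) :
    n ≤ ringKrullDim (ReciprocalComplement (MvPolynomial (Fin n) K)
      (FractionRing (MvPolynomial (Fin n) K))) := by
  induction n with
  | zero => exact ringKrullDim_nonneg_of_nontrivial
  | succ n ih =>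
    refine le_trans ?_ (recip_ringKrullDim_succ_le
      (L := FractionRing (MvPolynomial (Fin n) K)) (MvPolynomial.finSuccEquiv K n).toRingEquiv)
    push_cast
    gcongr

/-- The Krull dimension of the reciprocal complement of the polynomial ring
`K[X₁, …, Xₙ]` over a field `K` equals `n`. -/
theorem recip_polynomialRing_krullDim (K : Type*) [Field K] (n : ℕ)
    (F : Type*) [Field F] [Algebra (MvPolynomial (Fin n) K) F]
    [IsFractionRing (MvPolynomial (Fin n) K) F] :
    ringKrullDim (ReciprocalComplement (MvPolynomial (Fin n) K) F) = n := by
  refine le_antisymm (recip_polynomialRing_krullDim_le K n F) ?_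
  cases n with
  | zero => exact ringKrullDim_nonneg_of_nontrivial
  | succ n =>
    refine le_trans ?_ (recip_ringKrullDim_succ_le
      (L := FractionRing (MvPolynomial (Fin n) K)) (MvPolynomial.finSuccEquiv K n).toRingEquiv)
    push_cast
    gcongr
    exact le_recip_polynomialRing_krullDim K n
end

section
/- Let K be a field and n ≥ 2, and let R = R(K[X_1, ..., X_n]) be the reciprocal complement of the polynomial ring. Then the ideal (1/X_1)R ∩ (1/X_2)R of R is not finitely generated. In particular, R is not a finite conductor domain (i.e., it is not the case that the intersection of every pair of principal ideals of R is finitely generated). -/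
namespace RecipFC

open Polynomial

variable {ι K F : Type*} [Field K] [Field F] [Algebra (MvPolynomial ι K) F]

/-! ### Deformations and their degree valuations -/

variable (ι K F) in
/-- A ring homomorphism from `K[X_i]` to `F[T]` that becomes the inclusion `K[X_i] ⊆ F` after
evaluating `T` at a point of `F`. -/
structure Deformation where
  /-- The homomorphism. -/
  toHom : MvPolynomial ι K →+* F[X]
  /-- The point at which the deformation specializes to the inclusion. -/
  pt : F
  eval_pt : ∀ f, (toHom f).eval pt = algebraMap (MvPolynomial ι K) F f

/-- The homomorphism `K[X_i] → S` sending `X_i` to `p i`, where `K` acts on `S` through a given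
homomorphism `F → S`. -/
noncomputable def subst {S : Type*} [CommRing S] (c : F →+* S) (p : ι → S) :
    MvPolynomial ι K →+* S :=
  MvPolynomial.eval₂Hom (c.comp ((algebraMap (MvPolynomial ι K) F).comp MvPolynomial.C)) p

@[simp] lemma subst_X {S : Type*} [CommRing S] (c : F →+* S) (p : ι → S) (k : ι) :
    subst (K := K) c p (MvPolynomial.X k) = p k := by
  simp [subst]

@[simp] lemma subst_C {S : Type*} [CommRing S] (c : F →+* S) (p : ι → S) (a : K) :
    subst (ι := ι) c p (MvPolynomial.C a) = c (algebraMap (MvPolynomial ι K) F (MvPolynomial.C a)) := by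
  simp [subst]

lemma inv_mem {f : MvPolynomial ι K} (hf : f ≠ 0) :
    (algebraMap (MvPolynomial ι K) F f)⁻¹ ∈ ReciprocalComplement (MvPolynomial ι K) F :=
  Subring.subset_closure ⟨f, hf, rfl⟩

section Val

variable [IsFractionRing (MvPolynomial ι K) F]

lemma algebraMap_inj : Function.Injective (algebraMap (MvPolynomial ι K) F) :=
  IsFractionRing.injective _ _

lemma var_ne_zero (k : ι) : algebraMap (MvPolynomial ι K) F (MvPolynomial.X k) ≠ 0 := by
  intro h
  exact MvPolynomial.X_ne_zero k (algebraMap_inj (F := F) (h.trans (map_zero _).symm))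

lemma algebraMap_ne_zero {f : MvPolynomial ι K} (hf : f ≠ 0) :
    algebraMap (MvPolynomial ι K) F f ≠ 0 := fun h =>
  hf (algebraMap_inj (F := F) (h.trans (map_zero _).symm))

namespace Deformation

variable (δ : Deformation ι K F)

lemma toHom_injective : Function.Injective δ.toHom := by
  intro f g h
  apply algebraMap_inj (F := F)
  rw [← δ.eval_pt, ← δ.eval_pt, h]

lemma comp_injective :
    Function.Injective ((algebraMap F[X] (RatFunc F)).comp δ.toHom) :=
  (RatFunc.algebraMap_injective F).comp δ.toHom_injective

/-- The extension of a deformation to a field homomorphism `F → F(T)`. -/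
noncomputable def ext : F →+* RatFunc F := IsFractionRing.lift δ.comp_injective

@[simp] lemma ext_algebraMap (f : MvPolynomial ι K) :
    δ.ext (algebraMap (MvPolynomial ι K) F f) = algebraMap F[X] (RatFunc F) (δ.toHom f) :=
  IsFractionRing.lift_algebraMap δ.comp_injective f

open Classical in
/-- The valuation on `F` given by the degree in `T` after applying the deformation. -/
noncomputable def val : Valuation F (WithZero (Multiplicative ℤ)) :=
  (RatFunc.inftyValuation F).comap δ.ext

lemma val_algebraMap {f : MvPolynomial ι K} (hf : f ≠ 0) :
    δ.val (algebraMap (MvPolynomial ι K) F f) = WithZero.exp ((δ.toHom f).natDegree : ℤ) := by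
  classical
  have h : δ.toHom f ≠ 0 := fun h => hf (δ.toHom_injective (h.trans (map_zero _).symm))
  simp only [val, Valuation.comap_apply, ext_algebraMap, RatFunc.inftyValuation_apply]
  convert RatFunc.inftyValuation.polynomial F h

lemma val_of_ext_eq_C {a : F} {c : F} (hc : c ≠ 0) (h : δ.ext a = RatFunc.C c) : δ.val a = 1 := by
  classical
  simp only [val, Valuation.comap_apply, h]
  convert RatFunc.inftyValuation.C F hc

lemma val_le_one_of_ext_eq_C {a : F} {c : F} (h : δ.ext a = RatFunc.C c) : δ.val a ≤ 1 := by
  by_cases hc : c = 0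
  · have : a = 0 := by
      apply δ.ext.injective
      rw [h, hc, map_zero, map_zero]
    simp [this]
  · exact (δ.val_of_ext_eq_C hc h).le

lemma val_le_one_of_mem {r : F} (hr : r ∈ ReciprocalComplement (MvPolynomial ι K) F) :
    δ.val r ≤ 1 := by
  have : ReciprocalComplement (MvPolynomial ι K) F ≤ δ.val.integer := by
    refine Subring.closure_le.2 ?_
    rintro _ ⟨f, hf, rfl⟩
    change δ.val _ ≤ 1
    rw [map_inv₀, val_algebraMap _ hf]
    apply inv_le_one_of_one_le₀
    rw [← WithZero.exp_zero, WithZero.exp_le_exp]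
    positivity
  exact this hr

/-- `A` is a constant part of `r`: the deformation sends `A` to the constant `A` of `F(T)`, and
`r - A` has negative degree. -/
def IsConstPart (r A : F) : Prop := δ.ext A = RatFunc.C A ∧ δ.val (r - A) < 1

variable {δ}

lemma IsConstPart.of_fixed {A : F} (h : δ.ext A = RatFunc.C A) : δ.IsConstPart A A :=
  ⟨h, by simp⟩

lemma IsConstPart.add {r s A B : F} (h : δ.IsConstPart r A) (h' : δ.IsConstPart s B) :
    δ.IsConstPart (r + s) (A + B) := by
  refine ⟨by rw [map_add, map_add, h.1, h'.1], ?_⟩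
  rw [add_sub_add_comm]
  exact Valuation.map_add_lt _ h.2 h'.2

lemma IsConstPart.neg {r A : F} (h : δ.IsConstPart r A) : δ.IsConstPart (-r) (-A) := by
  refine ⟨by rw [map_neg, map_neg, h.1], ?_⟩
  rw [neg_sub_neg, Valuation.map_sub_swap]
  exact h.2

lemma IsConstPart.mul {r s A B : F} (hr : δ.val r ≤ 1) (h : δ.IsConstPart r A)
    (h' : δ.IsConstPart s B) : δ.IsConstPart (r * s) (A * B) := by
  refine ⟨by rw [map_mul, map_mul, h.1, h'.1], ?_⟩
  have : r * s - A * B = r * (s - B) + B * (r - A) := by ring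
  rw [this]
  apply Valuation.map_add_lt
  · rw [map_mul]
    exact mul_lt_one_of_nonneg_of_lt_one_right hr zero_le h'.2
  · rw [map_mul]
    exact mul_lt_one_of_nonneg_of_lt_one_right (δ.val_le_one_of_ext_eq_C h'.1) zero_le h.2

end Deformation

end Val

/-! ### The scaling and shear deformations -/

section TwoVariables

variable [DecidableEq ι] {i j : ι}

/-- Setting `X_i = X_j = 0`. A polynomial is free of `X_i` and `X_j` when it is fixed by this map. -/
noncomputable def kill (K : Type*) [Field K] (i j : ι) : MvPolynomial ι K →+* MvPolynomial ι K :=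
  (MvPolynomial.aeval fun k => if k = i ∨ k = j then 0 else MvPolynomial.X k).toRingHom

variable (K F) in
/-- The deformation `X_i ↦ T X_i`, `X_j ↦ T X_j`, specializing to the inclusion at `T = 1`. -/
noncomputable def scaling (i j : ι) : Deformation ι K F where
  toHom := subst C fun k =>
    if k = i ∨ k = j then X * C (algebraMap (MvPolynomial ι K) F (MvPolynomial.X k))
    else C (algebraMap (MvPolynomial ι K) F (MvPolynomial.X k))
  pt := 1
  eval_pt := by
    intro f
    rw [← Polynomial.coe_evalRingHom, ← RingHom.comp_apply]
    congr 1
    apply MvPolynomial.ringHom_ext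
    · intro a; simp
    · intro k
      by_cases h : k = i ∨ k = j <;> simp [h]

variable (K F) in
/-- The deformation `X_i ↦ T`, `X_j ↦ T ^ N + (X_j - X_i ^ N)`, specializing to the inclusion at
`T = X_i`. -/
noncomputable def shear (i j : ι) (N : ℕ) : Deformation ι K F where
  toHom := subst C fun k =>
    if k = i then X
    else if k = j then X ^ N + C (algebraMap (MvPolynomial ι K) F
      (MvPolynomial.X j - MvPolynomial.X i ^ N))
    else C (algebraMap (MvPolynomial ι K) F (MvPolynomial.X k))
  pt := algebraMap (MvPolynomial ι K) F (MvPolynomial.X i)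
  eval_pt := by
    intro f
    rw [← Polynomial.coe_evalRingHom, ← RingHom.comp_apply]
    congr 1
    apply MvPolynomial.ringHom_ext
    · intro a; simp
    · intro k
      by_cases h : k = i
      · simp [h]
      by_cases h' : k = j
      · subst h'; simp [h]
      simp [h, h']

lemma scaling_of_free {f : MvPolynomial ι K} (hf : kill K i j f = f) :
    (scaling K F i j).toHom f = C (algebraMap (MvPolynomial ι K) F f) := by
  have : (scaling K F i j).toHom.comp (kill K i j) =
      (C.comp (algebraMap (MvPolynomial ι K) F)).comp (kill K i j) := by
    apply MvPolynomial.ringHom_ext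
    · intro a; simp [kill, scaling, MvPolynomial.algebraMap_eq]
    · intro k
      by_cases h : k = i ∨ k = j <;> simp [kill, scaling, h]
  have := RingHom.congr_fun this f
  simpa [hf] using this

lemma shear_of_free {N : ℕ} {f : MvPolynomial ι K} (hf : kill K i j f = f) :
    (shear K F i j N).toHom f = C (algebraMap (MvPolynomial ι K) F f) := by
  have : (shear K F i j N).toHom.comp (kill K i j) =
      (C.comp (algebraMap (MvPolynomial ι K) F)).comp (kill K i j) := by
    apply MvPolynomial.ringHom_ext
    · intro a; simp [kill, shear, MvPolynomial.algebraMap_eq]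
    · intro k
      by_cases h : k = i
      · simp [kill, h]
      by_cases h' : k = j
      · simp [kill, h']
      simp [kill, shear, h, h']
  have := RingHom.congr_fun this f
  simpa [hf] using this

lemma shear_special (hij : i ≠ j) (N : ℕ) :
    (shear K F i j N).toHom (MvPolynomial.X j - MvPolynomial.X i ^ N) =
      C (algebraMap (MvPolynomial ι K) F (MvPolynomial.X j - MvPolynomial.X i ^ N)) := by
  rw [map_sub, map_pow]
  simp [shear, hij.symm]

lemma special_ne_zero (hij : i ≠ j) (N : ℕ) :
    (MvPolynomial.X j - MvPolynomial.X i ^ N : MvPolynomial ι K) ≠ 0 := by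
  intro h
  have := congrArg (MvPolynomial.aeval (R := K) (fun k => if k = i then (1 : K[X]) else X)) h
  simp only [map_sub, map_pow, MvPolynomial.aeval_X, if_neg hij.symm, map_zero, if_true,
    one_pow] at this
  exact Polynomial.X_sub_C_ne_zero (1 : K) (by simpa using this)

variable [IsFractionRing (MvPolynomial ι K) F]

lemma scaling_natDegree_pos {f : MvPolynomial ι K} (hf : kill K i j f ≠ f) :
    0 < ((scaling K F i j).toHom f).natDegree := by
  by_contra! h0
  obtain ⟨c, hc⟩ := Polynomial.natDegree_eq_zero.1 (Nat.le_zero.1 h0)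
  -- a constant polynomial takes the same value at `T = 1` and at `T = 0`
  have h1 := (scaling K F i j).eval_pt f
  have h2 : ((scaling K F i j).toHom f).eval 0 =
      algebraMap (MvPolynomial ι K) F (kill K i j f) := by
    rw [← Polynomial.coe_evalRingHom, ← RingHom.comp_apply, ← RingHom.comp_apply]
    congr 1
    apply MvPolynomial.ringHom_ext
    · intro a; simp [kill, scaling, MvPolynomial.algebraMap_eq]
    · intro k
      by_cases h : k = i ∨ k = j <;> simp [kill, scaling, h]
  rw [← hc, eval_C] at h1 h2
  exact hf (algebraMap_inj (F := F) (h2.symm.trans h1))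

/-- If `f` has degree zero for `shear N`, it equals `h (X_j - X_i ^ N)` with `h` free of `X_i`, so that
its degree in `X_i` is a multiple of `N`; for `N` large, `h` is then also free of `X_j`. -/
lemma eventually_shear_natDegree_pos (hij : i ≠ j) {f : MvPolynomial ι K} (hf : kill K i j f ≠ f) :
    ∀ᶠ N in Filter.atTop, 0 < ((shear K F i j N).toHom f).natDegree := by
  -- `τ f` is `f` viewed as a polynomial in `X_i`; `h` is `f` with `X_i = 0`, in the variable `X_j`
  let ξ : ι → F := fun k => algebraMap (MvPolynomial ι K) F (MvPolynomial.X k)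
  let τ : MvPolynomial ι K →+* F[X] := subst C fun k => if k = i then X else C (ξ k)
  let η : MvPolynomial ι K →+* F[X] :=
    subst C fun k => if k = i then 0 else if k = j then X else C (ξ k)
  filter_upwards [Filter.eventually_gt_atTop (τ f).natDegree] with N hN
  have hN0 : N ≠ 0 := by omega
  by_contra! h0
  obtain ⟨c, hc⟩ := Polynomial.natDegree_eq_zero.1 (Nat.le_zero.1 h0)
  let ρ : MvPolynomial ι K →+* MvPolynomial ι K :=
    (MvPolynomial.aeval fun k => if k = i then 0
      else if k = j then MvPolynomial.X j - MvPolynomial.X i ^ N else MvPolynomial.X k).toRingHom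
  have h1 := (shear K F i j N).eval_pt f
  have h2 : ((shear K F i j N).toHom f).eval 0 = algebraMap (MvPolynomial ι K) F (ρ f) := by
    rw [← Polynomial.coe_evalRingHom, ← RingHom.comp_apply, ← RingHom.comp_apply]
    congr 1
    apply MvPolynomial.ringHom_ext
    · intro a; simp [ρ, shear, MvPolynomial.algebraMap_eq]
    · intro k
      by_cases h : k = i
      · simp [ρ, shear, h]
      by_cases h' : k = j
      · simp [ρ, shear, h', hij.symm, hN0]
      simp [ρ, shear, h, h']
  rw [← hc, eval_C] at h1 h2
  have hρ : ρ f = f := algebraMap_inj (F := F) (h2.symm.trans h1)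
  have h3 : τ f = (η f).comp (C (ξ j) - X ^ N) := by
    conv_lhs => rw [← hρ]
    rw [← Polynomial.coe_compRingHom_apply, ← RingHom.comp_apply, ← RingHom.comp_apply]
    congr 1
    apply MvPolynomial.ringHom_ext
    · intro a; simp [ρ, τ, η, MvPolynomial.algebraMap_eq]
    · intro k
      by_cases h : k = i
      · simp [ρ, η, h]
      by_cases h' : k = j
      · simp [ρ, τ, η, h', hij.symm]
      simp [ρ, τ, η, h, h']
  have hdeg : (C (ξ j) - X ^ N : F[X]).natDegree = N := by
    rw [← neg_sub, natDegree_neg, natDegree_X_pow_sub_C]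
  have h4 : (η f).natDegree = 0 := by
    rw [h3, natDegree_comp, hdeg] at hN
    by_contra hne
    exact absurd (Nat.le_mul_of_pos_left N (Nat.pos_of_ne_zero hne)) (by omega)
  obtain ⟨d, hd⟩ := Polynomial.natDegree_eq_zero.1 h4
  have h5 : (τ f).eval (ξ i) = algebraMap (MvPolynomial ι K) F f := by
    rw [← Polynomial.coe_evalRingHom, ← RingHom.comp_apply]
    congr 1
    apply MvPolynomial.ringHom_ext
    · intro a; simp [τ]
    · intro k
      by_cases h : k = i <;> simp [τ, ξ, h]
  have h6 : (η f).eval 0 = algebraMap (MvPolynomial ι K) F (kill K i j f) := by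
    rw [← Polynomial.coe_evalRingHom, ← RingHom.comp_apply, ← RingHom.comp_apply]
    congr 1
    apply MvPolynomial.ringHom_ext
    · intro a; simp [η, kill, MvPolynomial.algebraMap_eq]
    · intro k
      by_cases h : k = i
      · simp [η, kill, h]
      by_cases h' : k = j
      · simp [η, kill, h', hij.symm]
      simp [η, ξ, kill, h, h']
  rw [h3, ← hd, C_comp, eval_C] at h5
  rw [← hd, eval_C] at h6
  exact hf (algebraMap_inj (F := F) (h6.symm.trans h5))

/-! ### Constant parts of elements of the reciprocal complement -/

omit [DecidableEq ι] in
lemma isConstPart_inv_of_free (δ : Deformation ι K F) {f : MvPolynomial ι K}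
    (h : δ.toHom f = C (algebraMap (MvPolynomial ι K) F f)) :
    δ.IsConstPart (algebraMap (MvPolynomial ι K) F f)⁻¹ (algebraMap (MvPolynomial ι K) F f)⁻¹ := by
  apply Deformation.IsConstPart.of_fixed
  rw [map_inv₀, map_inv₀, Deformation.ext_algebraMap, h, RatFunc.algebraMap_C]

omit [DecidableEq ι] in
lemma isConstPart_inv_of_natDegree_pos (δ : Deformation ι K F) {f : MvPolynomial ι K} (hf : f ≠ 0)
    (h : 0 < (δ.toHom f).natDegree) :
    δ.IsConstPart (algebraMap (MvPolynomial ι K) F f)⁻¹ 0 := by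
  refine ⟨by simp, ?_⟩
  rw [sub_zero, map_inv₀, δ.val_algebraMap hf]
  apply inv_lt_one_of_one_lt₀
  rw [← WithZero.exp_zero, WithZero.exp_lt_exp]
  exact_mod_cast h

/-- Every element of the reciprocal complement has a constant part common to `scaling` and to almost
all `shear N`. -/
lemma exists_constantPart (hij : i ≠ j) {r : F}
    (hr : r ∈ ReciprocalComplement (MvPolynomial ι K) F) :
    ∃ A, (scaling K F i j).IsConstPart r A ∧
      ∀ᶠ N in Filter.atTop, (shear K F i j N).IsConstPart r A := by
  induction hr using Subring.closure_induction with
  | mem x hx =>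
    obtain ⟨f, hf, rfl⟩ := hx
    by_cases hk : kill K i j f = f
    · exact ⟨(algebraMap (MvPolynomial ι K) F f)⁻¹, isConstPart_inv_of_free _ (scaling_of_free hk),
        Filter.Eventually.of_forall fun N => isConstPart_inv_of_free _ (shear_of_free hk)⟩
    · refine ⟨0, isConstPart_inv_of_natDegree_pos _ hf (scaling_natDegree_pos hk), ?_⟩
      filter_upwards [eventually_shear_natDegree_pos (F := F) hij hk] with N hN
      exact isConstPart_inv_of_natDegree_pos _ hf hN
  | zero =>
    exact ⟨0, .of_fixed (by simp), Filter.Eventually.of_forall fun N => .of_fixed (by simp)⟩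
  | one =>
    exact ⟨1, .of_fixed (by simp), Filter.Eventually.of_forall fun N => .of_fixed (by simp)⟩
  | add x y hx hy ihx ihy =>
    obtain ⟨A, hA, hA'⟩ := ihx
    obtain ⟨B, hB, hB'⟩ := ihy
    exact ⟨A + B, hA.add hB, by filter_upwards [hA', hB'] with N h h' using h.add h'⟩
  | neg x hx ih =>
    obtain ⟨A, hA, hA'⟩ := ih
    exact ⟨-A, hA.neg, by filter_upwards [hA'] with N h using h.neg⟩
  | mul x y hx hy ihx ihy =>
    obtain ⟨A, hA, hA'⟩ := ihx
    obtain ⟨B, hB, hB'⟩ := ihy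
    exact ⟨A * B, hA.mul (Deformation.val_le_one_of_mem _ hx) hB, by
      filter_upwards [hA', hB'] with N h h' using h.mul (Deformation.val_le_one_of_mem _ hx) h'⟩

/-- For `g` with `X_i g, X_j g ∈ R`, the product `X_j g` has negative degree for almost all
`shear N`. -/
lemma eventually_shear_val_lt_one (hij : i ≠ j) {g : F}
    (hi : algebraMap (MvPolynomial ι K) F (MvPolynomial.X i) * g ∈
      ReciprocalComplement (MvPolynomial ι K) F)
    (hj : algebraMap (MvPolynomial ι K) F (MvPolynomial.X j) * g ∈
      ReciprocalComplement (MvPolynomial ι K) F) :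
    ∀ᶠ N in Filter.atTop, (shear K F i j N).val
      (algebraMap (MvPolynomial ι K) F (MvPolynomial.X j) * g) < 1 := by
  obtain ⟨B, hB, hB'⟩ := exists_constantPart hij hi
  obtain ⟨A, hA, hA'⟩ := exists_constantPart hij hj
  set x := algebraMap (MvPolynomial ι K) F (MvPolynomial.X i) with hx
  set y := algebraMap (MvPolynomial ι K) F (MvPolynomial.X j) with hy
  -- the degree-one part, for `scaling`, of the identity `x (y g) = y (x g)`
  have key : x * A = y * B := by
    classical
    set δ := scaling K F i j
    have hXne : (RatFunc.X : RatFunc F) ≠ 0 := RatFunc.X_ne_zero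
    have hδx : δ.ext x = RatFunc.X * RatFunc.C x := by
      rw [hx, Deformation.ext_algebraMap]
      simp [δ, scaling]
      exact mul_comm _ _
    have hδy : δ.ext y = RatFunc.X * RatFunc.C y := by
      rw [hy, Deformation.ext_algebraMap]
      simp [δ, scaling]
      exact mul_comm _ _
    have e : x * A - y * B = y * (x * g - B) - x * (y * g - A) := by ring
    have e2 := congrArg δ.ext e
    rw [map_sub, map_sub, map_mul, map_mul, map_mul _ y, map_mul _ x (_ - _), hδx, hδy,
      hA.1, hB.1] at e2
    have e3 : RatFunc.C (x * A - y * B) =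
        RatFunc.C y * δ.ext (x * g - B) - RatFunc.C x * δ.ext (y * g - A) := by
      apply mul_left_cancel₀ hXne
      rw [map_sub, map_mul, map_mul]
      linear_combination e2
    have hlt : RatFunc.inftyValuation F (RatFunc.C (x * A - y * B)) < 1 := by
      have hx1 : RatFunc.inftyValuation F (RatFunc.C x) = 1 :=
        RatFunc.inftyValuation.C F (var_ne_zero i)
      have hy1 : RatFunc.inftyValuation F (RatFunc.C y) = 1 :=
        RatFunc.inftyValuation.C F (var_ne_zero j)
      rw [e3]
      apply Valuation.map_sub_lt
      · rw [map_mul, hy1, one_mul]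
        have := hB.2
        simp only [Deformation.val, Valuation.comap_apply] at this
        convert this
      · rw [map_mul, hx1, one_mul]
        have := hA.2
        simp only [Deformation.val, Valuation.comap_apply] at this
        convert this
    by_contra hne
    rw [RatFunc.inftyValuation.C F (sub_ne_zero.2 hne)] at hlt
    exact lt_irrefl _ hlt
  filter_upwards [hA', hB', Filter.eventually_ge_atTop 2] with N hAN hBN hN
  -- apply `shear N` to `key`, giving `T A = (T ^ N + X_j - X_i ^ N) B`, and compare coefficients of `T`
  have hA0 : A = 0 := by
    have e := congrArg (shear K F i j N).ext key
    rw [map_mul, map_mul, hAN.1, hBN.1, hx, hy, Deformation.ext_algebraMap,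
      Deformation.ext_algebraMap, ← RatFunc.algebraMap_C, ← RatFunc.algebraMap_C, ← map_mul,
      ← map_mul] at e
    have e' := RatFunc.algebraMap_injective F e
    have e1 := congrArg (fun p => Polynomial.coeff p 1) e'
    have hN1 : (1 : ℕ) ≠ N := by omega
    simpa [shear, hij.symm, coeff_X_pow, coeff_C, hN1, -map_sub, -map_pow] using e1
  simpa [hA0] using hAN.2

/-! ### The intersection is not finitely generated -/

/-- The element `r_N = 1 / (X_j (X_j - X_i ^ N))` satisfies `X_j r_N ∈ R` and `X_i r_N ∈ R`. -/
lemma special_mem (hij : i ≠ j) {N : ℕ} (hN : N ≠ 0) {x y z : F}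
    (hx : x = algebraMap (MvPolynomial ι K) F (MvPolynomial.X i))
    (hy : y = algebraMap (MvPolynomial ι K) F (MvPolynomial.X j))
    (hz : z = algebraMap (MvPolynomial ι K) F (MvPolynomial.X j - MvPolynomial.X i ^ N)) :
    y * (y⁻¹ * z⁻¹) ∈ ReciprocalComplement (MvPolynomial ι K) F ∧
      x * (y⁻¹ * z⁻¹) ∈ ReciprocalComplement (MvPolynomial ι K) F := by
  have hx0 : x ≠ 0 := hx ▸ var_ne_zero i
  have hy0 : y ≠ 0 := hy ▸ var_ne_zero j
  have hz0 : z ≠ 0 := hz ▸ algebraMap_ne_zero (special_ne_zero hij N)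
  have hxm : x⁻¹ ∈ ReciprocalComplement (MvPolynomial ι K) F :=
    hx ▸ inv_mem (MvPolynomial.X_ne_zero i)
  have hym : y⁻¹ ∈ ReciprocalComplement (MvPolynomial ι K) F :=
    hy ▸ inv_mem (MvPolynomial.X_ne_zero j)
  have hzm : z⁻¹ ∈ ReciprocalComplement (MvPolynomial ι K) F :=
    hz ▸ inv_mem (special_ne_zero hij N)
  have hzx : z = y - x ^ N := by rw [hz, map_sub, map_pow, ← hx, ← hy]
  constructor
  · rwa [mul_inv_cancel_left₀ hy0]
  · obtain ⟨M, rfl⟩ := Nat.exists_eq_succ_of_ne_zero hN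
    have : x * (y⁻¹ * z⁻¹) = x⁻¹ ^ M * (z⁻¹ - y⁻¹) := by
      have e : y - z = x ^ M * x := by rw [hzx, Nat.succ_eq_add_one]; ring
      have e' : z⁻¹ - y⁻¹ = (y - z) * (y⁻¹ * z⁻¹) := by field_simp
      rw [e', e, inv_pow, mul_assoc (x ^ M), inv_mul_cancel_left₀ (pow_ne_zero M hx0)]
    rw [this]
    exact mul_mem (pow_mem hxm M) (sub_mem hzm hym)

/-- An element of the ideal generated by `1 / a` is an element whose product with `a` lies in `R`. -/
lemma mem_span_inv {R : Subring F} {a : F} (ha : a ≠ 0) (h : a⁻¹ ∈ R) (r : R) :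
    r ∈ Ideal.span {(⟨a⁻¹, h⟩ : R)} ↔ a * (r : F) ∈ R := by
  rw [Ideal.mem_span_singleton']
  constructor
  · rintro ⟨s, rfl⟩
    have : a * ((s * ⟨a⁻¹, h⟩ : R) : F) = s := by
      push_cast
      field_simp
    rw [this]
    exact s.2
  · intro hr
    refine ⟨⟨_, hr⟩, ?_⟩
    ext
    push_cast
    field_simp

theorem inf_not_fg (hij : i ≠ j)
    (h₁ : (algebraMap (MvPolynomial ι K) F (MvPolynomial.X i))⁻¹ ∈
      ReciprocalComplement (MvPolynomial ι K) F)
    (h₂ : (algebraMap (MvPolynomial ι K) F (MvPolynomial.X j))⁻¹ ∈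
      ReciprocalComplement (MvPolynomial ι K) F) :
    ¬ (Ideal.span {(⟨_, h₁⟩ : ReciprocalComplement (MvPolynomial ι K) F)} ⊓
      Ideal.span {(⟨_, h₂⟩ : ReciprocalComplement (MvPolynomial ι K) F)}).FG := by
  rintro ⟨S, hS⟩
  set y := algebraMap (MvPolynomial ι K) F (MvPolynomial.X j) with hy
  have hy0 : y ≠ 0 := var_ne_zero j
  have hev : ∀ᶠ N in Filter.atTop, ∀ s ∈ S, (shear K F i j N).val (y * (s : F)) < 1 := by
    rw [Filter.eventually_all_finset]
    intro s hs
    have hs' := Ideal.subset_span (Finset.mem_coe.2 hs)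
    rw [hS] at hs'
    rw [SetLike.mem_coe, Ideal.mem_inf, mem_span_inv (var_ne_zero i), mem_span_inv hy0] at hs'
    exact eventually_shear_val_lt_one hij hs'.1 hs'.2
  obtain ⟨N, hN, hN0⟩ := (hev.and (Filter.eventually_ne_atTop 0)).exists
  have hall : ∀ r ∈ Ideal.span (S : Set (ReciprocalComplement (MvPolynomial ι K) F)),
      (shear K F i j N).val (y * (r : F)) < 1 := by
    intro r hr
    induction hr using Submodule.span_induction with
    | mem s hs => exact hN s hs
    | zero => simp
    | add a b _ _ ha hb =>
      push_cast
      rw [mul_add]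
      exact Valuation.map_add_lt _ ha hb
    | smul a b _ hb =>
      have : y * ((a • b : ReciprocalComplement (MvPolynomial ι K) F) : F) = a * (y * b) := by
        rw [smul_eq_mul]; push_cast; ring
      rw [this, map_mul]
      exact mul_lt_one_of_nonneg_of_lt_one_right (Deformation.val_le_one_of_mem _ a.2) zero_le hb
  set z := algebraMap (MvPolynomial ι K) F (MvPolynomial.X j - MvPolynomial.X i ^ N) with hz
  have hz0 : z ≠ 0 := algebraMap_ne_zero (special_ne_zero hij N)
  obtain ⟨hm1, hm2⟩ := special_mem hij hN0 rfl hy hz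
  have hr : y⁻¹ * z⁻¹ ∈ ReciprocalComplement (MvPolynomial ι K) F :=
    mul_mem h₂ (inv_mem (special_ne_zero hij N))
  have hlt := hall ⟨_, hr⟩ (by
    rw [hS, Ideal.mem_inf, mem_span_inv (var_ne_zero i), mem_span_inv hy0]
    exact ⟨hm2, hm1⟩)
  have hone : (shear K F i j N).val (y * (y⁻¹ * z⁻¹)) = 1 := by
    rw [mul_inv_cancel_left₀ hy0, map_inv₀, inv_eq_one]
    apply Deformation.val_of_ext_eq_C _ hz0
    rw [hz, Deformation.ext_algebraMap, shear_special hij, RatFunc.algebraMap_C]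
  exact absurd hone hlt.ne

end TwoVariables

end RecipFC

/-- For `n ≥ 2`, in the reciprocal complement `R` of `K[X₁, …, Xₙ]` the ideal
`(1/X₁)R ∩ (1/X₂)R` is not finitely generated; in particular `R` is not a finite
conductor domain. -/
theorem recip_polynomialRing_not_finiteConductor (K : Type*) [Field K] (n : ℕ) (hn : 2 ≤ n)
    (F : Type*) [Field F] [Algebra (MvPolynomial (Fin n) K) F]
    [IsFractionRing (MvPolynomial (Fin n) K) F] :
    (∃ (h₁ : (algebraMap (MvPolynomial (Fin n) K) F (MvPolynomial.X ⟨0, by omega⟩))⁻¹ ∈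
          ReciprocalComplement (MvPolynomial (Fin n) K) F)
        (h₂ : (algebraMap (MvPolynomial (Fin n) K) F (MvPolynomial.X ⟨1, by omega⟩))⁻¹ ∈
          ReciprocalComplement (MvPolynomial (Fin n) K) F),
      ¬ (Ideal.span {(⟨_, h₁⟩ : ReciprocalComplement (MvPolynomial (Fin n) K) F)} ⊓
          Ideal.span {(⟨_, h₂⟩ : ReciprocalComplement (MvPolynomial (Fin n) K) F)}).FG)
    ∧ ¬ ∀ a b : ReciprocalComplement (MvPolynomial (Fin n) K) F,
        (Ideal.span {a} ⊓ Ideal.span {b}).FG := by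
  have hij : (⟨0, by omega⟩ : Fin n) ≠ ⟨1, by omega⟩ := by simp
  have h₁ := RecipFC.inv_mem (K := K) (F := F) (MvPolynomial.X_ne_zero (⟨0, by omega⟩ : Fin n))
  have h₂ := RecipFC.inv_mem (K := K) (F := F) (MvPolynomial.X_ne_zero (⟨1, by omega⟩ : Fin n))
  have h := RecipFC.inf_not_fg hij h₁ h₂
  exact ⟨⟨h₁, h₂, h⟩, fun hall => h (hall _ _)⟩
end
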